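/- arXiv:2409.15485 — 9 statements merged into one kernel-verified Lean document; each statement's English description precedes it below -/
import Mathlib

section
/- Let Q be a Borel probability measure on ℝ such that the pushforward of Q under the reflection 𝔯(s) = -s equals the measure Q with density s ↦ e^{-s} (i.e. (𝔯_*Q)(A) = ∫_A e^{-s} dQ(s) for all Borel A). Then for every Borel set B ⊆ ℝ that is nonempty and bounded above, Q(B) ≤ e^{sup B} · Q(-B), where -B = {-s : s ∈ B}. -/
open MeasureTheory Set

/-- If a Borel probability measure `Q` on `ℝ` satisfies the finite-time fluctuation relation
`𝔯_* Q = e^{-s} dQ` (with `𝔯(s) = -s`), then for every nonempty Borel set `B` that is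
bounded above, `Q(B) ≤ e^{sup B} · Q(-B)`. -/
theorem fluctuation_relation_set_inequality
    (Q : Measure ℝ) [IsProbabilityMeasure Q]
    (hfluct : Measure.map (fun s : ℝ => -s) Q =
      Q.withDensity (fun s : ℝ => ENNReal.ofReal (Real.exp (-s))))
    (B : Set ℝ) (hB : MeasurableSet B) (hne : B.Nonempty) (hbdd : BddAbove B) :
    Q B ≤ ENNReal.ofReal (Real.exp (sSup B)) * Q (-B) := by
  have h1 : Q (-B) = ∫⁻ s in B, ENNReal.ofReal (Real.exp (-s)) ∂Q := by
    rw [← withDensity_apply _ hB, ← hfluct, Measure.map_apply measurable_neg hB]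
    rfl
  have h2 : ENNReal.ofReal (Real.exp (-sSup B)) * Q B ≤ Q (-B) := by
    rw [h1, ← setLIntegral_const]
    refine setLIntegral_mono' hB fun s hs => ?_
    exact ENNReal.ofReal_le_ofReal
      (Real.exp_le_exp.mpr (neg_le_neg (le_csSup hbdd hs)))
  calc Q B = ENNReal.ofReal (Real.exp (sSup B)) *
        (ENNReal.ofReal (Real.exp (-sSup B)) * Q B) := by
        rw [← mul_assoc, ← ENNReal.ofReal_mul (Real.exp_pos _).le, ← Real.exp_add]
        simp
    _ ≤ _ := by gcongr
end

section
/- Assume (Cl1), (Cl2) and (Cl3). Then for every t ∈ ℝ the entropy balance equation holds: Ent(ω_t|ω) = -∫_0^t ( ∫_X σ(φ^s(x)) dω(x) ) ds, i.e. ∫_X log(dω_t/dω) dω_t = ∫_0^t ω_s(σ) ds, where ω_s(σ) = ∫_X σ dω_s = ∫_X σ(φ^s(x)) dω(x). -/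
open MeasureTheory Filter Set intervalIntegral

/-- The cocycle `c^t = log (dω_t/dω) ∘ φ^t`, where `ω_t = (φ^t)_* ω`. -/
noncomputable def flowCocycle {X : Type*} [MeasurableSpace X]
    (φ : ℝ → X → X) (ω : Measure X) (t : ℝ) (x : X) : ℝ :=
  Real.log (((Measure.map (φ t) ω).rnDeriv ω (φ t x)).toReal)

/-- Entropy balance equation: under (Cl1)–(Cl3),
`Ent(ω_t|ω) = -∫_0^t ω_s(σ) ds`, i.e. `∫ log(dω_t/dω) dω_t = ∫_0^t (∫ σ∘φ^s dω) ds`.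
Here (Cl2)–(Cl3) are encoded by the continuous versions `C t` of `c^t` together with the
differentiability at `0`, in sup norm, of `t ↦ C t` with derivative the entropy production
observable `σ`. -/
theorem entropy_balance_equation
    {X : Type*} [MetricSpace X] [CompactSpace X] [MeasurableSpace X] [BorelSpace X]
    (φ : ℝ → X → X)
    (hcont : Continuous fun p : ℝ × X => φ p.1 p.2)
    (hzero : ∀ x, φ 0 x = x)
    (hgroup : ∀ t s : ℝ, ∀ x, φ (t + s) x = φ t (φ s x))
    (ω : Measure X) [IsProbabilityMeasure ω]
    (hCl1 : ∀ t : ℝ, ω ≪ Measure.map (φ t) ω ∧ Measure.map (φ t) ω ≪ ω)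
    (C : ℝ → C(X, ℝ))
    (hCl2 : ∀ t : ℝ, flowCocycle φ ω t =ᵐ[ω] ⇑(C t))
    (σ : C(X, ℝ))
    (hCl3 : HasDerivAt C σ 0) :
    ∀ t : ℝ,
      ∫ y, Real.log (((Measure.map (φ t) ω).rnDeriv ω y).toReal) ∂(Measure.map (φ t) ω) =
        ∫ s in (0:ℝ)..t, ∫ x, σ (φ s x) ∂ω := by
  have hc : ∀ t, Continuous (φ t) := fun t => hcont.comp (Continuous.prodMk_right t)
  have hm : ∀ t, Measurable (φ t) := fun t => (hc t).measurable
  -- almost everywhere statements are transported by the flow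
  have tr : ∀ (t : ℝ) {p : X → Prop}, (∀ᵐ y ∂ω, p y) → ∀ᵐ x ∂ω, p (φ t x) := by
    intro t p hp
    exact ae_of_ae_map (hm t).aemeasurable ((hCl1 t).2.ae_le hp)
  have hemb : ∀ t, MeasurableEmbedding (φ t) := by
    intro t
    have hl : Function.LeftInverse (φ (-t)) (φ t) := by
      intro x
      rw [← hgroup, neg_add_cancel, hzero]
    exact ((hc t).isClosedEmbedding hl.injective).measurableEmbedding
  have hprob : ∀ t, IsProbabilityMeasure (Measure.map (φ t) ω) := fun t =>
    Measure.isProbabilityMeasure_map (hm t).aemeasurable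
  have hmap : ∀ t h : ℝ, Measure.map (φ h) (Measure.map (φ t) ω) = Measure.map (φ (t + h)) ω := by
    intro t h
    rw [Measure.map_map (hm h) (hm t)]
    congr 1
    funext x
    rw [add_comm, hgroup]
    rfl
  have hpos : ∀ t, ∀ᵐ x ∂ω, 0 < (Measure.map (φ t) ω).rnDeriv ω x := fun t =>
    (hCl1 t).1.ae_le (Measure.rnDeriv_pos (hCl1 t).2)
  -- cocycle relation
  have hcoc : ∀ t h : ℝ, ∀ᵐ x ∂ω, C (t + h) x = C t x + C h (φ t x) := by
    intro t h
    have := hprob t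
    have := hprob h
    have hac : Measure.map (φ h) (Measure.map (φ t) ω) ≪ Measure.map (φ h) ω :=
      (hCl1 t).2.map (hm h)
    have h1 := tr (t + h) (Measure.rnDeriv_mul_rnDeriv (κ := ω) hac)
    have h2 := tr t ((hemb h).rnDeriv_map (Measure.map (φ t) ω) ω)
    filter_upwards [h1, h2, tr t (hpos t), tr (t + h) (hpos h),
      tr t (Measure.rnDeriv_lt_top (Measure.map (φ t) ω) ω),
      tr (t + h) (Measure.rnDeriv_lt_top (Measure.map (φ h) ω) ω),
      hCl2 (t + h), hCl2 t, tr t (hCl2 h)] with x h1 h2 p1 p2 q1 q2 e1 e2 e3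
    have hx : φ (t + h) x = φ h (φ t x) := by rw [add_comm, hgroup]
    rw [← e1, ← e2, ← e3]
    unfold flowCocycle
    rw [hmap, Pi.mul_apply] at h1
    rw [hmap] at h2
    rw [hx] at h1 p2 q2 ⊢
    rw [← h1, h2, ENNReal.toReal_mul, Real.log_mul]
    · exact (ENNReal.toReal_pos p1.ne' q1.ne).ne'
    · exact (ENNReal.toReal_pos p2.ne' q2.ne).ne'
  have hint : ∀ (f : C(X, ℝ)) (t : ℝ), Integrable (fun x => f (φ t x)) ω := fun f t =>
    (f.continuous.comp (hc t)).integrable_of_hasCompactSupport (HasCompactSupport.of_compactSpace _)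
  have hint0 : ∀ (f : C(X, ℝ)), Integrable (fun x => f x) ω := fun f =>
    f.continuous.integrable_of_hasCompactSupport (HasCompactSupport.of_compactSpace _)
  let L : ℝ → (C(X, ℝ) →L[ℝ] ℝ) := fun t => LinearMap.mkContinuous
    { toFun := fun f => ∫ x, f (φ t x) ∂ω
      map_add' := fun f g => integral_add (hint f t) (hint g t)
      map_smul' := fun c f => integral_const_mul c _ } 1 (by
        intro f
        have := norm_integral_le_of_norm_le_const (μ := ω) (f := fun x => f (φ t x)) (C := ‖f‖)
          (Eventually.of_forall fun x => f.norm_coe_le_norm _)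
        simpa using this)
  have hL : ∀ t f, L t f = ∫ x, f (φ t x) ∂ω := fun t f => rfl
  have hF : ∀ t s : ℝ, ∫ x, C s x ∂ω = ∫ x, C t x ∂ω + L t (C (s - t)) := by
    intro t s
    rw [hL, ← integral_add (hint0 _) (hint _ _)]
    apply MeasureTheory.integral_congr_ae
    filter_upwards [hcoc t (s - t)] with x hx
    rw [← hx, add_sub_cancel]
  have hD : ∀ t : ℝ, HasDerivAt (fun s => ∫ x, C s x ∂ω) (∫ x, σ (φ t x) ∂ω) t := by
    intro t
    have h1 : HasDerivAt (fun s => C (s - t)) σ t := by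
      apply HasDerivAt.comp_sub_const
      simpa using hCl3
    have h2 := ((L t).hasFDerivAt.comp_hasDerivAt t h1).const_add (∫ x, C t x ∂ω)
    rw [← hL]
    refine h2.congr_of_eventuallyEq (Eventually.of_forall fun s => hF t s)
  have hcs : Continuous fun s => ∫ x, σ (φ s x) ∂ω := by
    apply continuous_of_dominated (bound := fun _ => ‖σ‖)
    · exact fun s => (hint σ s).aestronglyMeasurable
    · exact fun s => Eventually.of_forall fun x => σ.norm_coe_le_norm _
    · exact integrable_const _
    · exact Eventually.of_forall fun x =>
        σ.continuous.comp (hcont.comp (Continuous.prodMk_left x))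
  intro t
  have h0 : ∫ x, C 0 x ∂ω = 0 := by
    have := hF 0 0
    rw [hL] at this
    simp only [hzero, sub_zero] at this
    linarith
  rw [integral_eq_sub_of_hasDerivAt (fun s _ => hD s) (hcs.intervalIntegrable _ _), h0, sub_zero,
    (hemb t).integral_map]
  exact MeasureTheory.integral_congr_ae (hCl2 t)
end

section
/- Assume (Cl1), (Cl2) and (Cl3). Then ∫_X σ dω = 0, i.e. the reference state expectation of the entropy production observable vanishes. -/
open MeasureTheory Filter Set

/-- Under (Cl1)–(Cl3), the reference state expectation of the entropy production
observable vanishes: `ω(σ) = 0`. -/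
theorem entropy_production_mean_zero
    {X : Type*} [MetricSpace X] [CompactSpace X] [MeasurableSpace X] [BorelSpace X]
    (φ : ℝ → X → X)
    (hcont : Continuous fun p : ℝ × X => φ p.1 p.2)
    (hzero : ∀ x, φ 0 x = x)
    (hgroup : ∀ t s : ℝ, ∀ x, φ (t + s) x = φ t (φ s x))
    (ω : Measure X) [IsProbabilityMeasure ω]
    (hCl1 : ∀ t : ℝ, ω ≪ Measure.map (φ t) ω ∧ Measure.map (φ t) ω ≪ ω)
    (C : ℝ → C(X, ℝ))
    (hCl2 : ∀ t : ℝ, flowCocycle φ ω t =ᵐ[ω] ⇑(C t))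
    (σ : C(X, ℝ))
    (hCl3 : HasDerivAt C σ 0) :
    ∫ x, σ x ∂ω = 0 := by
  have hint : ∀ f : C(X, ℝ), Integrable (fun x => f x) ω := fun f =>
    f.continuous.integrable_of_hasCompactSupport (HasCompactSupport.of_compactSpace _)
  -- integration as a continuous linear functional
  let L : C(X, ℝ) →L[ℝ] ℝ := LinearMap.mkContinuous
    { toFun := fun f => ∫ x, f x ∂ω
      map_add' := fun f g => integral_add (hint f) (hint g)
      map_smul' := fun c f => integral_const_mul c (fun x => f x) } 1 (by
      intro f
      have h := norm_integral_le_of_norm_le_const (μ := ω) (f := fun x => f x) (C := ‖f‖)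
        (Eventually.of_forall fun x => f.norm_coe_le_norm x)
      simpa using h)
  have hL : ∀ f, L f = ∫ x, f x ∂ω := fun f => rfl
  have hd : HasDerivAt (fun t => L (C t)) (L σ) 0 := L.hasFDerivAt.comp_hasDerivAt 0 hCl3
  -- the value at time zero
  have h0 : L (C 0) = 0 := by
    have hid : φ 0 = id := funext hzero
    have h1 : flowCocycle φ ω 0 =ᵐ[ω] 0 := by
      have := llr_self ω
      filter_upwards [this] with x hx
      simpa [flowCocycle, hid, llr_def] using hx
    rw [hL, integral_congr_ae ((hCl2 0).symm.trans h1)]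
    simp
  -- nonnegativity
  have hnn : ∀ t, 0 ≤ L (C t) := by
    intro t
    have hm : Measurable (φ t) :=
      (hcont.comp (continuous_const.prodMk continuous_id)).measurable
    set ν := Measure.map (φ t) ω with hν
    have : IsProbabilityMeasure ν := Measure.isProbabilityMeasure_map hm.aemeasurable
    have hac : ω ≪ ν := (hCl1 t).1
    have hac' : ν ≪ ω := (hCl1 t).2
    have h1 : ∫ x, Real.exp (-(C t x)) ∂ω = 1 := by
      have e1 : ∫ x, Real.exp (-(C t x)) ∂ω = ∫ x, Real.exp (-(llr ν ω (φ t x))) ∂ω := by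
        apply integral_congr_ae
        filter_upwards [hCl2 t] with x hx
        rw [← hx]
        rfl
      have e2 : ∫ x, Real.exp (-(llr ν ω (φ t x))) ∂ω = ∫ y, Real.exp (-(llr ν ω y)) ∂ν := by
        rw [hν, integral_map hm.aemeasurable]
        exact (measurable_llr _ _).neg.exp.aestronglyMeasurable
      have e3 : ∫ y, Real.exp (-(llr ν ω y)) ∂ν = ∫ y, (ω.rnDeriv ν y).toReal ∂ν :=
        integral_congr_ae (exp_neg_llr hac')
      rw [e1, e2, e3, Measure.integral_toReal_rnDeriv hac]
      simp
    have h2 : ∫ x, (1 - C t x) ∂ω ≤ ∫ x, Real.exp (-(C t x)) ∂ω := by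
      apply integral_mono ((integrable_const 1).sub (hint (C t)))
      · exact hint ⟨fun x => Real.exp (-(C t x)), by fun_prop⟩
      · intro x
        have := Real.add_one_le_exp (-(C t x))
        change 1 - C t x ≤ Real.exp (-(C t x))
        linarith
    rw [h1, integral_sub (integrable_const 1) (hint (C t))] at h2
    rw [hL]
    simp at h2
    exact h2
  have hmin : IsLocalMin (fun t => L (C t)) 0 :=
    Eventually.of_forall fun t => by simpa [h0] using hnn t
  exact hmin.hasDerivAt_eq_zero hd
end

section
/- Assume (Cl1) and that (X,φ,ω) is TRI with time-reversal ι. Then: (1) for every t ∈ ℝ, the equality c^t ∘ ι = c^{-t} holds ω-almost everywhere; (2) if moreover (Cl2) and (Cl3) hold and ω has full support (every nonempty open subset of X has positive ω-measure), then c^t ∘ ι = c^{-t} everywhere on X for every t, and σ ∘ ι = -σ. -/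
open MeasureTheory Filter Set

/-- Under (Cl1) and time-reversal invariance with time-reversal `ι`:
(1) `c^t ∘ ι = c^{-t}` holds `ω`-a.e.;
(2) if moreover (Cl2) and (Cl3) hold (continuous versions `C t` of `c^t`, differentiable
at `0` with derivative `σ`) and `ω` has full support, then `C t ∘ ι = C (-t)` everywhere
and `σ ∘ ι = -σ`. -/
theorem time_reversal_cocycle
    {X : Type*} [MetricSpace X] [CompactSpace X] [MeasurableSpace X] [BorelSpace X]
    (φ : ℝ → X → X)
    (hcont : Continuous fun p : ℝ × X => φ p.1 p.2)
    (hzero : ∀ x, φ 0 x = x)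
    (hgroup : ∀ t s : ℝ, ∀ x, φ (t + s) x = φ t (φ s x))
    (ω : Measure X) [IsProbabilityMeasure ω]
    (hCl1 : ∀ t : ℝ, ω ≪ Measure.map (φ t) ω ∧ Measure.map (φ t) ω ≪ ω)
    (ι : X → X)
    (hιcont : Continuous ι)
    (hιinv : ∀ x, ι (ι x) = x)
    (hιφ : ∀ t : ℝ, ∀ x, ι (φ t x) = φ (-t) (ι x))
    (hTRI : Measure.map ι ω = ω) :
    -- (1) `c^t ∘ ι = c^{-t}` `ω`-a.e.
    (∀ t : ℝ, (fun x => flowCocycle φ ω t (ι x)) =ᵐ[ω] flowCocycle φ ω (-t)) ∧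
    -- (2) under (Cl2)–(Cl3) and full support, the identities hold everywhere
    (∀ C : ℝ → C(X, ℝ), (∀ t : ℝ, flowCocycle φ ω t =ᵐ[ω] ⇑(C t)) →
      ∀ σ : C(X, ℝ), HasDerivAt C σ 0 →
        (∀ U : Set X, IsOpen U → U.Nonempty → 0 < ω U) →
          (∀ t : ℝ, ∀ x, C t (ι x) = C (-t) x) ∧ (∀ x, σ (ι x) = -σ x)) := by
  have hφm : ∀ t, Measurable (φ t) := fun t =>
    (hcont.comp (Continuous.prodMk_right t)).measurable
  have hιm : Measurable ι := hιcont.measurable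
  have hemb : MeasurableEmbedding ι :=
    (MeasurableEquiv.mk ⟨ι, ι, hιinv, hιinv⟩ hιm hιm).measurableEmbedding
  have h1 : ∀ t : ℝ, (fun x => flowCocycle φ ω t (ι x)) =ᵐ[ω] flowCocycle φ ω (-t) := by
    intro t
    have hmap : Measure.map ι (Measure.map (φ (-t)) ω) = Measure.map (φ t) ω := by
      rw [Measure.map_map hιm (hφm _)]
      have : ι ∘ φ (-t) = φ t ∘ ι := by
        funext x
        simp [hιφ]
      rw [this, ← Measure.map_map (hφm _) hιm, hTRI]
    have h := hemb.rnDeriv_map (Measure.map (φ (-t)) ω) ω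
    rw [hmap, hTRI] at h
    have h2 := ae_of_ae_map (hφm (-t)).aemeasurable ((hCl1 (-t)).2.ae_le h)
    filter_upwards [h2] with x hx
    simp only [flowCocycle]
    rw [← hx, hιφ, neg_neg]
  refine ⟨h1, ?_⟩
  intro C hC σ hσ hpos
  haveI : ω.IsOpenPosMeasure := ⟨fun U hU hne => (hpos U hU hne).ne'⟩
  have hqmp : Tendsto ι (ae ω) (ae ω) := by
    have : Measure.QuasiMeasurePreserving ι ω ω := ⟨hιm, hTRI.le.absolutelyContinuous⟩
    exact this.tendsto_ae
  have h3 : ∀ t : ℝ, ∀ x, C t (ι x) = C (-t) x := by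
    intro t x
    have e : (fun x => C t (ι x)) =ᵐ[ω] ⇑(C (-t)) := by
      filter_upwards [h1 t, hC (-t), hqmp.eventually (hC t)] with y a b c
      rw [← b, ← a, c]
    exact congrFun ((Continuous.ae_eq_iff_eq ω ((C t).continuous.comp hιcont)
      (C (-t)).continuous).1 e) x
  refine ⟨h3, fun x => ?_⟩
  have hev : ∀ y, HasDerivAt (fun s => C s y) (σ y) 0 := fun y =>
    (ContinuousMap.evalCLM ℝ y : C(X, ℝ) →L[ℝ] ℝ).hasFDerivAt.comp_hasDerivAt (0 : ℝ) hσ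
  have d1 := hev (ι x)
  have d2 : HasDerivAt (fun s : ℝ => C (-s) x) (-σ x) 0 := by
    have h0 : HasDerivAt (fun s => C s x) (σ x) (-(0 : ℝ)) := by simpa using hev x
    have h5 := h0.comp (0 : ℝ) (hasDerivAt_neg (0 : ℝ))
    rw [mul_neg_one] at h5
    exact h5
  have : (fun s => C s (ι x)) = fun s : ℝ => C (-s) x := funext fun s => h3 s x
  rw [this] at d1
  exact d1.unique d2
end

section
/- Assume (Cl1) and that (X,φ,ω) is TRI. Then for every t ∈ ℝ and every α ∈ ℂ, ∫_X e^{-α c^t} dω = conjugate( ∫_X e^{-(1-ᾱ) c^t} dω ), i.e. 𝔉_{ω,t}(α) = conj(𝔉_{ω,t}(1-ᾱ)), where 𝔉_{ω,t}(α) := ∫_X e^{-α c^t(x)} dω(x). -/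
open MeasureTheory Filter Set

/-- Under (Cl1) and time-reversal invariance, the moment generating function
`𝔉_{ω,t}(α) = ∫ e^{-α c^t} dω` satisfies the finite-time symmetry
`𝔉_{ω,t}(α) = conj (𝔉_{ω,t}(1 - ᾱ))` for all `t ∈ ℝ` and `α ∈ ℂ`. -/
theorem finite_time_ES_symmetry
    {X : Type*} [MetricSpace X] [CompactSpace X] [MeasurableSpace X] [BorelSpace X]
    (φ : ℝ → X → X)
    (hcont : Continuous fun p : ℝ × X => φ p.1 p.2)
    (hzero : ∀ x, φ 0 x = x)
    (hgroup : ∀ t s : ℝ, ∀ x, φ (t + s) x = φ t (φ s x))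
    (ω : Measure X) [IsProbabilityMeasure ω]
    (hCl1 : ∀ t : ℝ, ω ≪ Measure.map (φ t) ω ∧ Measure.map (φ t) ω ≪ ω)
    (ι : X → X)
    (hιcont : Continuous ι)
    (hιinv : ∀ x, ι (ι x) = x)
    (hιφ : ∀ t : ℝ, ∀ x, ι (φ t x) = φ (-t) (ι x))
    (hTRI : Measure.map ι ω = ω) :
    ∀ (t : ℝ) (α : ℂ),
      ∫ x, Complex.exp (-α * (flowCocycle φ ω t x : ℂ)) ∂ω =
        starRingEnd ℂ
          (∫ x, Complex.exp (-(1 - starRingEnd ℂ α) * (flowCocycle φ ω t x : ℂ)) ∂ω) := by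
  intro t α
  have hφ : ∀ s, Continuous (φ s) := fun s =>
    hcont.comp (continuous_const.prodMk continuous_id)
  have hψinv : ∀ x, φ t (ι (φ t (ι x))) = x := by
    intro x
    rw [hιφ, hιinv, ← hgroup, add_neg_cancel, hzero]
  let e : X ≃ᵐ X :=
    { toFun := fun x => φ t (ι x)
      invFun := fun x => φ t (ι x)
      left_inv := hψinv
      right_inv := hψinv
      measurable_toFun := ((hφ t).comp hιcont).measurable
      measurable_invFun := ((hφ t).comp hιcont).measurable }
  let j : X ≃ᵐ X :=
    { toFun := ι
      invFun := ι
      left_inv := hιinv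
      right_inv := hιinv
      measurable_toFun := hιcont.measurable
      measurable_invFun := hιcont.measurable }
  obtain ⟨h1, h2⟩ := hCl1 t
  set ν := Measure.map (φ t) ω with hν
  have : IsProbabilityMeasure ν :=
    Measure.isProbabilityMeasure_map (hφ t).measurable.aemeasurable
  have he1 : Measure.map e ω = ν := by
    have : (e : X → X) = φ t ∘ ι := rfl
    rw [this, ← Measure.map_map (hφ t).measurable hιcont.measurable, hTRI]
  have he2 : Measure.map e ν = ω := by
    rw [← he1, Measure.map_map e.measurable e.measurable]
    have : (e : X → X) ∘ e = id := funext hψinv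
    rw [this, Measure.map_id]
  have hj : ∀ g : X → ℂ, ∫ x, g (ι x) ∂ω = ∫ x, g x ∂ω := by
    intro g
    have := integral_map_equiv (μ := ω) j g
    rw [show Measure.map j ω = ω from hTRI] at this
    exact this.symm
  have hinv : ∀ᵐ x ∂ω, (ν.rnDeriv ω (e x))⁻¹ = ν.rnDeriv ω x := by
    have a1 := e.measurableEmbedding.rnDeriv_map ν ω
    rw [he1, he2] at a1
    have a2 := Measure.inv_rnDeriv h2
    rw [← he1] at a2
    have a3 := ae_of_ae_map e.measurable.aemeasurable a2
    rw [he1] at a3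
    filter_upwards [a1, a3] with x hx hx'
    rw [← hx]
    exact hx'
  have hpos : ∀ᵐ x ∂ω, 0 < (ν.rnDeriv ω x).toReal := by
    filter_upwards [Measure.rnDeriv_pos' h1, Measure.rnDeriv_lt_top ν ω] with x hx hx'
    exact ENNReal.toReal_pos hx.ne' hx'.ne
  have hL : ∫ x, Complex.exp (-α * (flowCocycle φ ω t x : ℂ)) ∂ω =
      ∫ x, Complex.exp ((1 - α) * (Real.log (ν.rnDeriv ω x).toReal : ℂ)) ∂ω := by
    rw [← hj]
    have := integral_map_equiv (μ := ω) e
      (fun y => Complex.exp (-α * (Real.log (ν.rnDeriv ω y).toReal : ℂ)))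
    rw [he1] at this
    refine Eq.trans this.symm ?_
    rw [← integral_rnDeriv_smul h2]
    refine integral_congr_ae ?_
    filter_upwards [hpos] with x hx
    rw [Complex.real_smul]
    nth_rewrite 1 [← Real.exp_log hx]
    rw [Complex.ofReal_exp, ← Complex.exp_add]
    congr 1
    ring
  rw [hL, ← integral_conj, ← hj (fun x => starRingEnd ℂ _)]
  refine integral_congr_ae ?_
  filter_upwards [hinv] with x hx
  have hc : flowCocycle φ ω t (ι x) = - Real.log (ν.rnDeriv ω x).toReal := by
    rw [← hx, ENNReal.toReal_inv, Real.log_inv, neg_neg]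
    rfl
  rw [hc, ← Complex.exp_conj]
  simp
  congr 1
  ring
end

section
/- Assume (Cl1) and that (X,φ,ω) is TRI. For t ∈ ℝ let Q_{ω,t} be the law of c^t under ω, i.e. the pushforward of ω under the (ω-a.e. defined, measurable) map c^t : X → ℝ. Then for every t, the pushforward of Q_{ω,t} under the reflection 𝔯(s) = -s equals the measure with density s ↦ e^{-s} with respect to Q_{ω,t}: (𝔯_* Q_{ω,t})(A) = ∫_A e^{-s} dQ_{ω,t}(s) for all Borel A ⊆ ℝ. In particular Q_{ω,t} and 𝔯_* Q_{ω,t} are mutually absolutely continuous. -/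
open MeasureTheory Filter Set

theorem map_withDensity_comp_aux {A B : Type*} [MeasurableSpace A] [MeasurableSpace B]
    (μ : Measure A) (S : A → B) (hS : Measurable S) (g : B → ENNReal) (hg : Measurable g) :
    Measure.map S (μ.withDensity (fun x => g (S x))) = (Measure.map S μ).withDensity g := by
  ext s hs
  rw [Measure.map_apply hS hs, withDensity_apply _ (hS hs), withDensity_apply _ hs,
    setLIntegral_map hs hg hS]

/-- Finite-time classical Evans–Searles fluctuation relation: under (Cl1) and
time-reversal invariance, the law `Q_{ω,t}` of `c^t` under `ω` satisfies
`𝔯_* Q_{ω,t} = e^{-s} dQ_{ω,t}` (with `𝔯(s) = -s`); in particular `Q_{ω,t}` and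
`𝔯_* Q_{ω,t}` are mutually absolutely continuous. -/
theorem finite_time_ES_fluctuation_relation
    {X : Type*} [MetricSpace X] [CompactSpace X] [MeasurableSpace X] [BorelSpace X]
    (φ : ℝ → X → X)
    (hcont : Continuous fun p : ℝ × X => φ p.1 p.2)
    (hzero : ∀ x, φ 0 x = x)
    (hgroup : ∀ t s : ℝ, ∀ x, φ (t + s) x = φ t (φ s x))
    (ω : Measure X) [IsProbabilityMeasure ω]
    (hCl1 : ∀ t : ℝ, ω ≪ Measure.map (φ t) ω ∧ Measure.map (φ t) ω ≪ ω)
    (ι : X → X)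
    (hιcont : Continuous ι)
    (hιinv : ∀ x, ι (ι x) = x)
    (hιφ : ∀ t : ℝ, ∀ x, ι (φ t x) = φ (-t) (ι x))
    (hTRI : Measure.map ι ω = ω) :
    ∀ t : ℝ,
      Measure.map (fun s : ℝ => -s) (Measure.map (flowCocycle φ ω t) ω) =
          (Measure.map (flowCocycle φ ω t) ω).withDensity
            (fun s : ℝ => ENNReal.ofReal (Real.exp (-s))) ∧
      (Measure.map (flowCocycle φ ω t) ω ≪
          Measure.map (fun s : ℝ => -s) (Measure.map (flowCocycle φ ω t) ω) ∧
        Measure.map (fun s : ℝ => -s) (Measure.map (flowCocycle φ ω t) ω) ≪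
          Measure.map (flowCocycle φ ω t) ω) := by
  intro t
  have hT : Measurable (φ t) :=
    (hcont.comp (continuous_const.prodMk continuous_id : Continuous fun x : X => (t, x))).measurable
  have hι : Measurable ι := hιcont.measurable
  obtain ⟨D, hD⟩ : ∃ D, D = (Measure.map (φ t) ω).rnDeriv ω := ⟨_, rfl⟩
  have hDm : Measurable D := by rw [hD]; exact Measure.measurable_rnDeriv _ _
  have hprob : IsProbabilityMeasure (Measure.map (φ t) ω) :=
    Measure.isProbabilityMeasure_map hT.aemeasurable
  have hDω : ω.withDensity D = Measure.map (φ t) ω := by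
    rw [hD]; exact Measure.withDensity_rnDeriv_eq _ _ (hCl1 t).2
  have hc : ∀ x, flowCocycle φ ω t x = Real.log (D (φ t x)).toReal := by
    intro x; rw [hD]; rfl
  have hcm : Measurable (flowCocycle φ ω t) := by
    rw [funext hc]
    exact Real.measurable_log.comp (hDm.comp hT).ennreal_toReal
  obtain ⟨τ, hτ⟩ : ∃ τ : X → X, τ = fun x => ι (φ t x) := ⟨_, rfl⟩
  have hτm : Measurable τ := by rw [hτ]; exact hι.comp hT
  have hττ : ∀ x, τ (τ x) = x := by
    intro x
    simp only [hτ]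
    rw [hιφ, hιinv, ← hgroup, neg_add_cancel, hzero]
  obtain ⟨ρ, hρ⟩ : ∃ ρ : X → ENNReal, ρ = fun x => D (ι x) := ⟨_, rfl⟩
  have hρm : Measurable ρ := by rw [hρ]; exact hDm.comp hι
  have hρτ : ∀ x, ρ (τ x) = D (φ t x) := by intro x; simp only [hρ, hτ, hιinv]
  have hτω : Measure.map τ ω = ω.withDensity ρ := by
    have h1 : Measure.map τ ω = Measure.map ι (Measure.map (φ t) ω) := by
      rw [Measure.map_map hι hT, hτ]; rfl
    have h2 := map_withDensity_comp_aux ω ι hι ρ hρm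
    have h3 : (fun x => ρ (ι x)) = D := by funext x; simp only [hρ, hιinv]
    rw [h3, hTRI, hDω] at h2
    rw [h1, h2]
  have hprod : ∀ᵐ x ∂ω, ρ x * ρ (τ x) = 1 := by
    have h1 : Measure.map τ (Measure.map τ ω) = ω := by
      rw [Measure.map_map hτm hτm]
      have : τ ∘ τ = id := funext hττ
      rw [this, Measure.map_id]
    have h2 := map_withDensity_comp_aux ω τ hτm (fun x => ρ (τ x)) (hρm.comp hτm)
    simp only [hττ] at h2
    rw [← hτω, h1, hτω, ← withDensity_mul (g := fun x => ρ (τ x)) _ hρm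
      (hρm.comp hτm)] at h2
    have h3 : ω.withDensity (fun _ => (1 : ENNReal)) =
        ω.withDensity (ρ * fun x => ρ (τ x)) := by
      rw [← h2]; exact withDensity_one
    have h4 := (withDensity_eq_iff_of_sigmaFinite (μ := ω) measurable_const.aemeasurable
      (hρm.mul (hρm.comp hτm)).aemeasurable).1 h3
    filter_upwards [h4] with x hx
    exact hx.symm
  have hcτ : ∀ x, flowCocycle φ ω t (τ x) = Real.log (ρ x).toReal := by
    intro x; rw [hc, ← hρτ, hττ]
  have hneg : ∀ᵐ x ∂ω, - flowCocycle φ ω t x = flowCocycle φ ω t (τ x) := by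
    filter_upwards [hprod] with x hx
    rw [hcτ, hc, ← hρτ, ENNReal.eq_inv_of_mul_eq_one_left hx, ENNReal.toReal_inv, Real.log_inv]
  have hexp : ρ =ᵐ[ω] fun x => ENNReal.ofReal (Real.exp (-(flowCocycle φ ω t x))) := by
    filter_upwards [hprod, hneg] with x hx hx'
    have h0 : ρ x ≠ 0 := by intro h; simp [h] at hx
    have h0' : ρ (τ x) ≠ 0 := by intro h; simp [h] at hx
    have h1 : ρ x ≠ ⊤ := by
      intro h; rw [h, ENNReal.top_mul h0'] at hx; exact ENNReal.top_ne_one hx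
    rw [hx', hcτ, Real.exp_log (ENNReal.toReal_pos h0 h1), ENNReal.ofReal_toReal h1]
  have hem : Measurable (fun s : ℝ => ENNReal.ofReal (Real.exp (-s))) := by fun_prop
  have main : Measure.map (fun s : ℝ => -s) (Measure.map (flowCocycle φ ω t) ω) =
          (Measure.map (flowCocycle φ ω t) ω).withDensity
            (fun s : ℝ => ENNReal.ofReal (Real.exp (-s))) := by
    rw [← map_withDensity_comp_aux ω _ hcm _ hem, ← withDensity_congr_ae hexp, ← hτω,
      Measure.map_map hcm hτm, Measure.map_map measurable_neg hcm]
    exact Measure.map_congr hneg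
  refine ⟨main, ?_, ?_⟩
  · rw [main]
    refine withDensity_absolutelyContinuous' hem.aemeasurable (Eventually.of_forall fun s => ?_)
    exact (ENNReal.ofReal_pos.2 (Real.exp_pos _)).ne'
  · rw [main]
    exact withDensity_absolutelyContinuous _ _
end

section
/- Assume (Cl1), (Cl2) and (Cl3), and let ω_+ be a Borel probability measure on X which is a weak limit point as T → ∞ of the time-averaged measures ⟨ω⟩_T, where ⟨ω⟩_T(A) = (1/T) ∫_0^T ω_t(A) dt (i.e. ω_+ is a NESS: there is a sequence T_n → ∞ with ∫ f d⟨ω⟩_{T_n} → ∫ f dω_+ for all continuous f). Then ∫_X σ dω_+ ≥ 0. -/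
open MeasureTheory Filter Set intervalIntegral

theorem key_lintegral
    {X : Type*} [MeasurableSpace X]
    (φ : ℝ → X → X) (hm : ∀ t, Measurable (φ t))
    (ω : Measure X) [IsProbabilityMeasure ω]
    (hCl1 : ∀ t : ℝ, ω ≪ Measure.map (φ t) ω ∧ Measure.map (φ t) ω ≪ ω)
    (C : ℝ → X → ℝ)
    (hCl2 : ∀ t : ℝ, flowCocycle φ ω t =ᵐ[ω] C t) (t : ℝ)
    (g : X → ENNReal) (hg : Measurable g) :
    ∫⁻ x, g (φ t x) * ENNReal.ofReal (Real.exp (-(C t x))) ∂ω = ∫⁻ x, g x ∂ω := by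
  have : IsProbabilityMeasure (Measure.map (φ t) ω) :=
    Measure.isProbabilityMeasure_map (hm t).aemeasurable
  set f := (Measure.map (φ t) ω).rnDeriv ω with hf
  have hfm : Measurable f := Measure.measurable_rnDeriv _ _
  have hpos : ∀ᵐ x ∂ω, 0 < f x := Measure.rnDeriv_pos' (hCl1 t).1
  have hfin : ∀ᵐ x ∂ω, f x < ⊤ := Measure.rnDeriv_lt_top _ _
  have hpos' : ∀ᵐ x ∂ω, 0 < f (φ t x) :=
    ae_of_ae_map (hm t).aemeasurable ((hCl1 t).2.ae_le hpos)
  have hfin' : ∀ᵐ x ∂ω, f (φ t x) < ⊤ :=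
    ae_of_ae_map (hm t).aemeasurable ((hCl1 t).2.ae_le hfin)
  have h1 : ∫⁻ x, g (φ t x) * ENNReal.ofReal (Real.exp (-(C t x))) ∂ω
      = ∫⁻ x, g (φ t x) * (f (φ t x))⁻¹ ∂ω := by
    apply lintegral_congr_ae
    filter_upwards [hpos', hfin', hCl2 t] with x h1 h2 h3
    have h4 : 0 < (f (φ t x)).toReal := ENNReal.toReal_pos h1.ne' h2.ne
    rw [← h3, flowCocycle, ← hf, Real.exp_neg, Real.exp_log h4, ENNReal.ofReal_inv_of_pos h4,
      ENNReal.ofReal_toReal h2.ne]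
  rw [h1, ← lintegral_map (f := fun y => g y * (f y)⁻¹) (hg.mul hfm.inv) (hm t),
    ← Measure.withDensity_rnDeriv_eq _ _ (hCl1 t).2, ← hf,
    lintegral_withDensity_eq_lintegral_mul _ hfm (g := fun y => g y * (f y)⁻¹) (hg.mul hfm.inv)]
  apply lintegral_congr_ae
  filter_upwards [hpos, hfin] with x h1 h2
  simp only [Pi.mul_apply]
  rw [mul_left_comm, ENNReal.mul_inv_cancel h1.ne' h2.ne, mul_one]

theorem cocycle_ae
    {X : Type*} [MeasurableSpace X]
    (φ : ℝ → X → X) (hm : ∀ t, Measurable (φ t))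
    (hzero : ∀ x, φ 0 x = x)
    (hgroup : ∀ t s : ℝ, ∀ x, φ (t + s) x = φ t (φ s x))
    (ω : Measure X) [IsProbabilityMeasure ω]
    (hCl1 : ∀ t : ℝ, ω ≪ Measure.map (φ t) ω ∧ Measure.map (φ t) ω ≪ ω)
    (C : ℝ → X → ℝ) (hCm : ∀ t, Measurable (C t))
    (hCl2 : ∀ t : ℝ, flowCocycle φ ω t =ᵐ[ω] C t) (t s : ℝ) :
    ∀ᵐ x ∂ω, C (t + s) x = C t (φ s x) + C s x := by
  have key := key_lintegral φ hm ω hCl1 C hCl2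
  have hD : ∀ t, Measurable fun x => ENNReal.ofReal (Real.exp (-(C t x))) := fun t => by
    have := hCm t
    fun_prop
  have main : (fun x => ENNReal.ofReal (Real.exp (-(C (t + s) x)))) =ᵐ[ω]
      fun x => ENNReal.ofReal (Real.exp (-(C t (φ s x)))) *
        ENNReal.ofReal (Real.exp (-(C s x))) := by
    apply ae_eq_of_forall_setLIntegral_eq_of_sigmaFinite (hD _)
      (((hD t).comp (hm s)).mul (hD s))
    intro A hA _
    -- indicator of the image of `A` under the flow
    set g : X → ENNReal := A.indicator 1 ∘ φ (-(t + s)) with hgdef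
    have hg : Measurable g := (measurable_one.indicator hA).comp (hm _)
    have hgA : ∀ x, g (φ t (φ s x)) = A.indicator 1 x := fun x => by
      simp only [hgdef, Function.comp]
      rw [← hgroup t s, ← hgroup, neg_add_cancel, hzero]
    have e1 := key (t + s) g hg
    have e2 := key t g hg
    have e3 := key s (fun x => g (φ t x) * ENNReal.ofReal (Real.exp (-(C t x))))
      ((hg.comp (hm t)).mul (hD t))
    simp only [hgroup, hgA] at e1 e3
    rw [← lintegral_indicator hA, ← lintegral_indicator hA]
    have e4 := e1.trans (e2.symm.trans e3.symm)
    refine Eq.trans (lintegral_congr fun x => ?_) (e4.trans (lintegral_congr fun x => ?_))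
    · by_cases hx : x ∈ A <;> simp [hx]
    · by_cases hx : x ∈ A <;> simp [hx]
  filter_upwards [main] with x hx
  rw [← ENNReal.ofReal_mul (Real.exp_pos _).le, ← Real.exp_add,
    ENNReal.ofReal_eq_ofReal_iff (Real.exp_pos _).le (Real.exp_pos _).le] at hx
  have := Real.exp_injective hx
  linarith

/-- Under (Cl1)–(Cl3), the expectation of the entropy production observable `σ` in any
NESS `ω₊` (a weak limit point of the time-averaged measures `⟨ω⟩_T`) is nonnegative. -/
theorem NESS_entropy_production_nonneg
    {X : Type*} [MetricSpace X] [CompactSpace X] [MeasurableSpace X] [BorelSpace X]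
    (φ : ℝ → X → X)
    (hcont : Continuous fun p : ℝ × X => φ p.1 p.2)
    (hzero : ∀ x, φ 0 x = x)
    (hgroup : ∀ t s : ℝ, ∀ x, φ (t + s) x = φ t (φ s x))
    (ω : Measure X) [IsProbabilityMeasure ω]
    (hCl1 : ∀ t : ℝ, ω ≪ Measure.map (φ t) ω ∧ Measure.map (φ t) ω ≪ ω)
    (C : ℝ → C(X, ℝ))
    (hCl2 : ∀ t : ℝ, flowCocycle φ ω t =ᵐ[ω] ⇑(C t))
    (σ : C(X, ℝ))
    (hCl3 : HasDerivAt C σ 0)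
    (ωp : Measure X) [IsProbabilityMeasure ωp]
    (T : ℕ → ℝ) (hTpos : ∀ n, 0 < T n) (hTtop : Tendsto T atTop atTop)
    (hNESS : ∀ f : C(X, ℝ),
      Tendsto (fun n => (T n)⁻¹ * ∫ t in (0:ℝ)..(T n), ∫ x, f (φ t x) ∂ω)
        atTop (nhds (∫ x, f x ∂ωp))) :
    0 ≤ ∫ x, σ x ∂ωp := by
  have hc : ∀ t, Continuous (φ t) := fun t => hcont.comp (Continuous.prodMk_right t)
  have hm : ∀ t, Measurable (φ t) := fun t => (hc t).measurable
  have hint : ∀ f : X → ℝ, Continuous f → Integrable f ω := fun f hf =>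
    hf.integrable_of_hasCompactSupport (HasCompactSupport.of_compactSpace f)
  have coc := cocycle_ae φ hm hzero hgroup ω hCl1 (fun t => ⇑(C t))
    (fun t => (C t).continuous.measurable) hCl2
  set F : ℝ → ℝ := fun t => ∫ x, C t x ∂ω with hF
  have hFadd : ∀ t s, F (t + s) = (∫ x, C t (φ s x) ∂ω) + F s := fun t s => by
    rw [hF]
    simp only
    rw [← integral_add (hint (fun x => C t (φ s x)) ((C t).continuous.comp (hc s))) (hint _ (C s).continuous)]
    exact integral_congr_ae (coc t s)
  have hF0 : F 0 = 0 := by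
    have := hFadd 0 0
    simp only [hzero, add_zero] at this
    change F 0 = F 0 + F 0 at this
    linarith
  have hFnn : ∀ t, 0 ≤ F t := fun t => by
    have hexp : Continuous fun x => Real.exp (-(C t x)) := by fun_prop
    have e := key_lintegral φ hm ω hCl1 (fun t => ⇑(C t)) hCl2 t 1 measurable_one
    simp only [Pi.one_apply, one_mul, lintegral_one, measure_univ] at e
    have e1 : ∫ x, Real.exp (-(C t x)) ∂ω = 1 := by
      rw [integral_eq_lintegral_of_nonneg_ae (ae_of_all _ fun x => (Real.exp_pos _).le)
        hexp.aestronglyMeasurable, e, ENNReal.toReal_one]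
    have e2 : ∫ x, (1 - Real.exp (-(C t x))) ∂ω ≤ F t := by
      apply integral_mono ((integrable_const _).sub (hint _ hexp)) (hint _ (C t).continuous)
      intro x
      have := Real.add_one_le_exp (-(C t x))
      change 1 - Real.exp (-(C t x)) ≤ C t x
      linarith
    rw [integral_sub (integrable_const _) (hint _ hexp), e1] at e2
    simpa using e2
  have hderiv : ∀ s, HasDerivAt F (∫ x, σ (φ s x) ∂ω) s := fun s => by
    let L₀ : C(X, ℝ) →ₗ[ℝ] ℝ :=
      { toFun := fun u => ∫ x, u (φ s x) ∂ω
        map_add' := fun u v => by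
          simpa using integral_add (hint _ (u.continuous.comp (hc s)))
            (hint _ (v.continuous.comp (hc s)))
        map_smul' := fun a u => by
          simpa using integral_const_mul a (fun x => u (φ s x)) }
    let L : C(X, ℝ) →L[ℝ] ℝ := L₀.mkContinuous 1 fun u => by
      have := norm_integral_le_of_norm_le_const (μ := ω) (f := fun x => u (φ s x))
        (ae_of_all _ fun x => u.norm_coe_le_norm (φ s x))
      simpa [L₀] using this
    have h1 : HasDerivAt (fun h => L (C h)) (L σ) 0 :=
      L.hasFDerivAt.comp_hasDerivAt (0 : ℝ) hCl3
    have h2 : HasDerivAt (fun r => L (C (r - s)) + F s) (L σ) s := by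
      have h3 : HasDerivAt (fun h => L (C h)) (L σ) (s - s) := by simpa using h1
      exact (h3.comp_sub_const s s).add_const _
    have h4 : F = fun r => L (C (r - s)) + F s := by
      funext r
      have := hFadd (r - s) s
      rw [sub_add_cancel] at this
      exact this
    rw [h4]
    exact h2
  have hgc : Continuous fun s => ∫ x, σ (φ s x) ∂ω := by
    apply continuous_of_dominated (bound := fun _ => ‖σ‖)
    · exact fun s => (σ.continuous.comp (hc s)).aestronglyMeasurable
    · exact fun s => ae_of_all _ fun x => σ.norm_coe_le_norm _
    · exact integrable_const _
    · exact ae_of_all _ fun x => σ.continuous.comp (hcont.comp (Continuous.prodMk_left x))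
  refine ge_of_tendsto' (hNESS σ) fun n => ?_
  rw [integral_eq_sub_of_hasDerivAt (fun s _ => hderiv s) (hgc.intervalIntegrable _ _), hF0,
    sub_zero]
  exact mul_nonneg (inv_nonneg.2 (hTpos n).le) (hFnn _)
end

section
/- Let m, M > 0 and let g : [0,∞) → ℂ be continuous with |g(t)| ≤ M e^{mt} for all t ≥ 0. Define f(z) := -i ∫_0^∞ e^{izt} g(t) dt for Im z > m. Let 𝔯 ∈ ℂ, N ≥ 1 an integer, and μ > 0, and suppose: (i) f extends to a function, still denoted f, which is analytic on {z : Im z > -μ} \ {𝔯} and has a pole of order N at 𝔯 (i.e. z ↦ (z-𝔯)^N f(z) extends analytically across 𝔯 with nonzero value at 𝔯); (ii) for some r > 0 and for j = 0, 1, sup_{y > -μ} ∫_{|x| > r} |f^{(j)}(x+iy)|^{2-j} dx < ∞, where f^{(0)} = f and f^{(1)} = f' is the complex derivative. Then for every γ with max(-Im 𝔯, 0) < γ < μ there exist a polynomial p of degree N-1 with p(0) equal to the residue of f at 𝔯 (the coefficient of (z-𝔯)^{-1} in the Laurent expansion of f at 𝔯) and a constant C ≥ 0 such that |g(t) - e^{-it𝔯}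 p(t)| ≤ C e^{-γ t} for all t ≥ 1. In particular, if N = 1 then p is the constant equal to the residue of f at 𝔯. -/
open MeasureTheory Filter Set
open scoped ENNReal

theorem integrable_exp_bound_aux (f : ℝ → ℂ) (hf : ContinuousOn f (Ici 0)) (K ε : ℝ) (hε : 0 < ε)
    (hb : ∀ t : ℝ, 0 ≤ t → ‖f t‖ ≤ K * Real.exp (-ε * t)) : IntegrableOn f (Ioi 0) := by
  refine Integrable.mono' ((exp_neg_integrableOn_Ioi 0 hε).const_mul K) ?_ ?_
  · exact (hf.mono Ioi_subset_Ici_self).aestronglyMeasurable measurableSet_Ioi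
  · filter_upwards [ae_restrict_mem measurableSet_Ioi] with t ht
    exact hb t (le_of_lt ht)

theorem pow_le_exp_aux (k : ℕ) (ε : ℝ) (hε : 0 < ε) (t : ℝ) (ht : 0 ≤ t) :
    t ^ k ≤ (k.factorial / ε ^ k) * Real.exp (ε * t) := by
  have h := Real.pow_div_factorial_le_exp (ε * t) (by positivity) k
  have hk : (0:ℝ) < k.factorial := by positivity
  rw [div_le_iff₀ hk, mul_pow] at h
  rw [div_mul_eq_mul_div, le_div_iff₀ (by positivity)]
  linarith

theorem integrable_pow_exp_aux (k : ℕ) (a : ℂ) (ha : 0 < a.re) :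
    IntegrableOn (fun t : ℝ => (t : ℂ) ^ k * Complex.exp (-a * t)) (Ioi 0) := by
  refine integrable_exp_bound_aux _ (by fun_prop) (k.factorial / (a.re / 2) ^ k) (a.re / 2)
    (by positivity) ?_
  intro t ht
  rw [norm_mul, norm_pow, Complex.norm_exp, Complex.norm_real, Real.norm_of_nonneg ht]
  have h1 := pow_le_exp_aux k (a.re / 2) (by positivity) t ht
  calc t ^ k * Real.exp (-a * t).re
      ≤ ((k.factorial / (a.re / 2) ^ k) * Real.exp (a.re / 2 * t)) * Real.exp (-a * t).re := by
        gcongr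
    _ = _ := by
        rw [mul_assoc, ← Real.exp_add]
        congr 2
        simp
        ring

theorem laplace_pow_aux (k : ℕ) (a : ℂ) (ha : 0 < a.re) :
    ∫ t in Ioi (0:ℝ), (t : ℂ) ^ k * Complex.exp (-a * t) = k.factorial / a ^ (k + 1) := by
  have ha0 : a ≠ 0 := by
    rintro rfl
    simp at ha
  have hexp : ∀ t : ℝ, HasDerivAt (fun t : ℝ => Complex.exp (-a * t))
      (-a * Complex.exp (-a * t)) t := by
    intro t
    have h := ((Complex.hasDerivAt_exp (-a * t)).comp (t : ℂ)
      ((hasDerivAt_id (t : ℂ)).const_mul (-a))).comp_ofReal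
    simpa [mul_comm] using h
  induction k with
  | zero =>
    have hi := integrable_pow_exp_aux 0 a ha
    simp only [pow_zero, one_mul] at hi
    have hi' : IntegrableOn (fun t : ℝ => -a * Complex.exp (-a * t)) (Ioi 0) := hi.const_mul (-a)
    have hz := tendsto_zero_of_hasDerivAt_of_integrableOn_Ioi (fun t _ => hexp t) hi' hi
    have h := integral_Ioi_of_hasDerivAt_of_tendsto' (fun t _ => hexp t) hi' hz
    rw [integral_const_mul] at h
    simp only [pow_zero, one_mul, Nat.factorial, zero_add, pow_one]
    field_simp
    simp at h
    push_cast
    linear_combination h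
  | succ k ih =>
    have hi := integrable_pow_exp_aux k a ha
    have hi1 := integrable_pow_exp_aux (k + 1) a ha
    have hd : ∀ t : ℝ, HasDerivAt (fun t : ℝ => (t : ℂ) ^ (k + 1) * Complex.exp (-a * t))
      (((k + 1 : ℕ) : ℂ) * ((t : ℂ) ^ k * Complex.exp (-a * t)) +
        (-a) * ((t : ℂ) ^ (k + 1) * Complex.exp (-a * t))) t := by
      intro t
      have h := ((hasDerivAt_pow (k + 1) (t : ℂ)).comp_ofReal).mul (hexp t)
      convert! h using 1
      simp
      ring
    have hi' := (hi.const_mul ((k + 1 : ℕ) : ℂ)).add (hi1.const_mul (-a))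
    have hz := tendsto_zero_of_hasDerivAt_of_integrableOn_Ioi (fun t _ => hd t) hi' hi1
    have h := integral_Ioi_of_hasDerivAt_of_tendsto' (fun t _ => hd t) hi' hz
    rw [integral_add (hi.const_mul ((k + 1 : ℕ) : ℂ)) (hi1.const_mul (-a)),
      integral_const_mul, integral_const_mul, ih] at h
    rw [eq_div_iff (by positivity)]
    rw [Nat.factorial_succ]
    field_simp at h
    simp at h
    push_cast at h ⊢
    simp only [neg_mul]
    linear_combination -h

theorem taylor_aux (U : Set ℂ) (hU : IsOpen U) (w : ℂ) (hw : w ∈ U) (G : ℂ → ℂ)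
    (hG : DifferentiableOn ℂ G U) (n : ℕ) :
    ∃ H : ℂ → ℂ, DifferentiableOn ℂ H U ∧
      ∀ z, G z = ∑ k ∈ Finset.range n, iteratedDeriv k G w / k.factorial * (z - w) ^ k
        + (z - w) ^ n * H z := by
  have han : AnalyticAt ℂ G w := hG.analyticAt (hU.mem_nhds hw)
  have hp := han.hasFPowerSeriesAt
  refine ⟨(Function.swap dslope w)^[n] G, ?_, ?_⟩
  · induction n with
    | zero => simpa using hG
    | succ n ih =>
      rw [Function.iterate_succ_apply']
      exact (Complex.differentiableOn_dslope (hU.mem_nhds hw)).mpr ih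
  · intro z
    induction n with
    | zero => simp
    | succ n ih =>
      rw [Finset.sum_range_succ, Function.iterate_succ_apply']
      have h1 := (hp.has_fpower_series_iterate_dslope_fslope n).coeff_zero 1
      rw [← FormalMultilinearSeries.coeff, FormalMultilinearSeries.coeff_iterate_fslope,
        zero_add, FormalMultilinearSeries.coeff_ofScalars] at h1
      have h2 := sub_smul_dslope ((Function.swap dslope w)^[n] G) w z
      rw [ih, h1, add_assoc]
      congr 1
      simp only [smul_eq_mul] at h2
      rw [pow_succ, mul_assoc]
      simp only [Function.swap] at h2 ⊢
      rw [h2]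
      ring
theorem shift_aux (φ : ℂ → ℂ) (μ a b : ℝ) (ha : -μ < a) (hab : a ≤ b)
    (hφ : DifferentiableOn ℂ φ {z : ℂ | -μ < z.im}) (B : ℝ≥0∞) (hB : B ≠ ∞)
    (hb : ∀ y ∈ Icc a b, ∫⁻ x : ℝ, ‖φ (x + y * Complex.I)‖ₑ ≤ B) :
    ∫ x : ℝ, φ (x + a * Complex.I) = ∫ x : ℝ, φ (x + b * Complex.I) := by
  have hcont : ∀ y, a ≤ y → Continuous (fun x : ℝ => φ (x + y * Complex.I)) := by
    intro y hy
    refine hφ.continuousOn.comp_continuous (by fun_prop) ?_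
    intro x
    simp only [mem_ofPred_eq]
    simp
    linarith
  have hint : ∀ y ∈ Icc a b, Integrable (fun x : ℝ => φ (x + y * Complex.I)) := by
    intro y hy
    refine ⟨(hcont y hy.1).aestronglyMeasurable, ?_⟩
    exact lt_of_le_of_lt (hb y hy) hB.lt_top
  have h2 : ContinuousOn (fun q : ℝ × ℝ => φ (q.1 + q.2 * Complex.I)) (univ ×ˢ Icc a b) := by
    refine hφ.continuousOn.comp (by fun_prop) ?_
    rintro ⟨x, y⟩ ⟨-, hy⟩
    simp only [mem_ofPred_eq]
    simp
    linarith [hy.1]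
  have hmeas : AEMeasurable (fun q : ℝ × ℝ => ‖φ (q.1 + q.2 * Complex.I)‖ₑ)
      ((volume : Measure ℝ).prod (volume.restrict (Icc a b))) := by
    have h3 : AEStronglyMeasurable (fun q : ℝ × ℝ => φ (q.1 + q.2 * Complex.I))
        ((volume : Measure (ℝ × ℝ)).restrict (univ ×ˢ Icc a b)) :=
      h2.aestronglyMeasurable (MeasurableSet.univ.prod measurableSet_Icc)
    have h4 : (volume : Measure (ℝ × ℝ)).restrict (univ ×ˢ Icc a b) =
        (volume : Measure ℝ).prod (volume.restrict (Icc a b)) := by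
      rw [Measure.volume_eq_prod, ← Measure.prod_restrict, Measure.restrict_univ]
    rw [h4] at h3
    exact h3.enorm
  set A : ℝ → ℝ≥0∞ := fun x => ∫⁻ y in Icc a b, ‖φ (x + y * Complex.I)‖ₑ with hA
  have hAfin : ∫⁻ x, A x ≠ ∞ := by
    have : ∫⁻ x, A x = ∫⁻ y in Icc a b, ∫⁻ x : ℝ, ‖φ (x + y * Complex.I)‖ₑ := by
      rw [hA]
      refine lintegral_lintegral_swap ?_
      exact hmeas
    rw [this]
    have h5 : ∫⁻ y in Icc a b, ∫⁻ x : ℝ, ‖φ (x + y * Complex.I)‖ₑ ≤ ∫⁻ y in Icc a b, B :=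
      setLIntegral_mono measurable_const hb
    refine (lt_of_le_of_lt h5 ?_).ne
    rw [setLIntegral_const]
    exact ENNReal.mul_lt_top hB.lt_top (by simp)
  have hAneg : ∫⁻ x, A (-x) = ∫⁻ x, A x := by
    exact lintegral_neg_eq_self A
  by_contra hne
  set D := (∫ x : ℝ, φ (x + a * Complex.I)) - ∫ x : ℝ, φ (x + b * Complex.I) with hD
  have hD0 : D ≠ 0 := sub_ne_zero.mpr hne
  have hlim : Tendsto (fun R : ℝ => (∫ x in (-R)..R, φ (x + a * Complex.I)) -
      ∫ x in (-R)..R, φ (x + b * Complex.I)) atTop (nhds D) := by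
    refine Tendsto.sub ?_ ?_
    · exact intervalIntegral_tendsto_integral (hint a ⟨le_rfl, hab⟩) tendsto_neg_atTop_atBot tendsto_id
    · exact intervalIntegral_tendsto_integral (hint b ⟨hab, le_rfl⟩) tendsto_neg_atTop_atBot tendsto_id
  have hrect : ∀ R : ℝ, ‖(∫ x in (-R)..R, φ (x + a * Complex.I)) -
      ∫ x in (-R)..R, φ (x + b * Complex.I)‖ₑ ≤ A R + A (-R) := by
    intro R
    have h := Complex.integral_boundary_rect_eq_zero_of_differentiableOn φ
      (⟨-R, a⟩ : ℂ) (⟨R, b⟩ : ℂ) (hφ.mono (by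
        intro z hz
        have := hz.2
        simp only [mem_preimage, uIcc_of_le hab] at this
        exact lt_of_lt_of_le ha this.1))
    simp only at h
    have hside : ∀ s : ℝ, ‖∫ y in a..b, φ (s + y * Complex.I)‖ₑ ≤ A s := by
      intro s
      rw [intervalIntegral.integral_of_le hab, ← integral_Icc_eq_integral_Ioc]
      exact enorm_integral_le_lintegral_enorm _
    have h6 : (∫ x in (-R)..R, φ (x + a * Complex.I)) - ∫ x in (-R)..R, φ (x + b * Complex.I)
        = Complex.I * (∫ y in a..b, φ (((-R : ℝ) : ℂ) + y * Complex.I)) -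
          Complex.I * (∫ y in a..b, φ ((R : ℂ) + y * Complex.I)) := by
      simp only [smul_eq_mul] at h
      linear_combination h
    rw [h6]
    refine (enorm_sub_le).trans ?_
    rw [enorm_mul, enorm_mul]
    have hI : ‖Complex.I‖ₑ = 1 := by simp [enorm_eq_nnnorm]
    rw [hI, one_mul, one_mul, add_comm]
    exact add_le_add (hside R) (hside (-R))
  have hev : ∀ᶠ R : ℝ in atTop, ‖D‖ₑ / 2 ≤ A R + A (-R) := by
    have : ‖D‖ₑ / 2 < ‖D‖ₑ := ENNReal.half_lt_self (by simpa using hD0) (by simp)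
    filter_upwards [hlim.enorm.eventually (lt_mem_nhds this)] with R hR
    exact hR.le.trans (hrect R)
  obtain ⟨R0, hR0⟩ := eventually_atTop.mp hev
  have h7 : ∫⁻ R in Ici R0, (‖D‖ₑ / 2) ≤ ∫⁻ R, (A R + A (-R)) := by
    refine le_trans ?_ (setLIntegral_le_lintegral (Ici R0) _)
    exact setLIntegral_mono' measurableSet_Ici hR0
  rw [setLIntegral_const, Real.volume_Ici, ENNReal.mul_top (by simpa using hD0)] at h7
  have h8 : ∫⁻ R, (A R + A (-R)) ≤ 2 * ∫⁻ R, A R := by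
    have hAm : AEMeasurable A := hmeas.lintegral_prod_right'
    rw [lintegral_add_left' hAm, hAneg, two_mul]
  exact absurd (top_le_iff.mp (h7.trans h8)) (ENNReal.mul_ne_top (by simp) hAfin)


theorem core_aux (μ γ c K c1 : ℝ) (hγ : γ < μ) (hc : -γ ≤ c) (hc1 : c1 < c) (H : ℂ → ℂ)
    (hH : DifferentiableOn ℂ H {z : ℂ | -μ < z.im}) (B : ℝ≥0∞) (hB : B ≠ ∞)
    (hb : ∀ y ∈ Icc (-γ) c, ∫⁻ x : ℝ, ‖deriv H (x + y * Complex.I)‖ₑ ≤ B)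
    (h : ℝ → ℂ) (hcont : ContinuousOn h (Ici 0))
    (hbound : ∀ t : ℝ, 0 ≤ t → ‖h t‖ ≤ K * Real.exp (c1 * t))
    (hL : ∀ x : ℝ, H (x + c * Complex.I) =
      -Complex.I * ∫ t in Ioi (0:ℝ), Complex.exp (Complex.I * (x + c * Complex.I) * t) * h t) :
    ∃ C : ℝ, 0 ≤ C ∧ ∀ t : ℝ, 1 ≤ t → ‖h t‖ ≤ C * Real.exp (-(γ * t)) := by
  have hopen : IsOpen {z : ℂ | -μ < z.im} := isOpen_lt continuous_const Complex.continuous_im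
  have hH' : DifferentiableOn ℂ (deriv H) {z : ℂ | -μ < z.im} := hH.deriv hopen
  have hK : 0 ≤ K := by
    have := hbound 0 le_rfl
    simp at this
    exact (norm_nonneg _).trans this
  set w : ℝ → ℂ := (Ioi (0:ℝ)).indicator (fun t => Complex.exp (-(c * t)) * h t) with hw
  have hnexp : ∀ t : ℝ, ‖Complex.exp (-(c * t))‖ = Real.exp (-(c * t)) := by
    intro t
    rw [Complex.norm_exp]
    simp
  have hwint : Integrable w := by
    rw [hw, integrable_indicator_iff measurableSet_Ioi]
    refine integrable_exp_bound_aux _ (ContinuousOn.mul (by fun_prop) hcont) K (c - c1)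
      (by linarith) ?_
    intro t ht
    rw [norm_mul, hnexp]
    calc _ ≤ Real.exp (-(c * t)) * (K * Real.exp (c1 * t)) := by
          gcongr
          exact hbound t ht
      _ = K * (Real.exp (-(c * t)) * Real.exp (c1 * t)) := by ring
      _ = _ := by
        rw [← Real.exp_add]
        congr 2
        ring
  have hwint2 : Integrable (fun t : ℝ => t • w t) := by
    have e : (fun t : ℝ => t • w t) =
        (Ioi (0:ℝ)).indicator (fun t => (t : ℂ) * (Complex.exp (-(c * t)) * h t)) := by
      ext t
      by_cases ht : t ∈ Ioi (0:ℝ)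
      · simp [hw, indicator_of_mem ht]
      · simp [hw, indicator_of_notMem ht]
    rw [e, integrable_indicator_iff measurableSet_Ioi]
    refine integrable_exp_bound_aux _ (ContinuousOn.mul (by fun_prop)
      (ContinuousOn.mul (by fun_prop) hcont))
      (K * (Nat.factorial 1 / ((c - c1) / 2) ^ 1)) ((c - c1) / 2)
      (by linarith) ?_
    intro t ht
    have h1 := pow_le_exp_aux 1 ((c - c1) / 2) (by linarith) t ht
    rw [pow_one] at h1
    rw [norm_mul, norm_mul, hnexp, Complex.norm_real, Real.norm_of_nonneg ht]
    calc _ ≤ (Nat.factorial 1 / ((c - c1) / 2) ^ 1 * Real.exp ((c - c1) / 2 * t)) *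
          (Real.exp (-(c * t)) * (K * Real.exp (c1 * t))) := by
          gcongr
          exact hbound t ht
      _ = K * (Nat.factorial 1 / ((c - c1) / 2) ^ 1) * (Real.exp ((c - c1) / 2 * t) *
          (Real.exp (-(c * t)) * Real.exp (c1 * t))) := by ring
      _ = _ := by
        rw [← Real.exp_add, ← Real.exp_add]
        congr 2
        ring
  set v : ℝ → ℂ := fun x => (-2 * Real.pi * Complex.I * x : ℂ) • w x with hv
  have hvint : Integrable v := by
    have := hwint2.const_mul (-2 * Real.pi * Complex.I : ℂ)
    refine this.congr (Eventually.of_forall fun x => ?_)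
    simp [hv, mul_assoc]
  have hvcont : Continuous v := by
    have e : v = fun t : ℝ => (-2 * Real.pi * Complex.I * (max t 0 : ℝ) : ℂ) *
        (Complex.exp (-(c * t)) * h (max t 0)) := by
      ext t
      by_cases ht : t ∈ Ioi (0:ℝ)
      · simp only [hv, hw, indicator_of_mem ht, max_eq_left (le_of_lt (show 0 < t from ht)), smul_eq_mul]
      · have ht' : t ≤ 0 := not_lt.mp ht
        simp [hv, hw, indicator_of_notMem ht, max_eq_right ht']
    rw [e]
    have : Continuous (fun t : ℝ => h (max t 0)) :=
      hcont.comp_continuous (by fun_prop) (fun t => mem_Ici.mpr (le_max_right t 0))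
    exact Continuous.mul (by fun_prop) (Continuous.mul (by fun_prop) this)
  have hfw : FourierTransform.fourier w =
      fun ξ : ℝ => Complex.I * H (((-2 * Real.pi * ξ : ℝ) : ℂ) + c * Complex.I) := by
    ext ξ
    rw [Real.fourier_real_eq_integral_exp_smul, hL, ← mul_assoc]
    simp only [mul_neg, Complex.I_mul_I, neg_neg, one_mul]
    rw [hw, ← integral_indicator measurableSet_Ioi]
    congr 1
    ext t
    by_cases ht : t ∈ Ioi (0:ℝ)
    · rw [indicator_of_mem ht, indicator_of_mem ht, smul_eq_mul, ← mul_assoc, ← Complex.exp_add]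
      congr 2
      push_cast
      linear_combination (c * t : ℂ) * (-Complex.I_sq)
    · rw [indicator_of_notMem ht, indicator_of_notMem ht, smul_zero]
  have hmem : ∀ x y : ℝ, -γ ≤ y → ((x : ℂ) + y * Complex.I) ∈ {z : ℂ | -μ < z.im} := by
    intro x y hy
    simp only [mem_ofPred_eq]
    simp
    linarith
  have hfv : FourierTransform.fourier v =
      fun ξ : ℝ => Complex.I * (deriv H (((-2 * Real.pi * ξ : ℝ) : ℂ) + c * Complex.I)
        * (-2 * Real.pi : ℝ)) := by
    ext ξ
    have h1 := Real.hasDerivAt_fourier hwint hwint2 ξ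
    rw [hfw] at h1
    have h2 : HasDerivAt (fun ξ : ℝ => ((-2 * Real.pi * ξ : ℝ) : ℂ) + c * Complex.I)
        ((-2 * Real.pi : ℝ) : ℂ) ξ := by
      have := (((hasDerivAt_id ξ).const_mul (-2 * Real.pi)).ofReal_comp).add_const
        ((c : ℂ) * Complex.I)
      simpa using this
    have h3 := ((hH.differentiableAt (hopen.mem_nhds
      (hmem (-2 * Real.pi * ξ) c hc))).hasDerivAt.comp ξ h2).const_mul Complex.I
    exact h1.unique h3
  have hcderiv : ∀ y, -γ ≤ y → Continuous (fun x : ℝ => deriv H (x + y * Complex.I)) := by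
    intro y hy
    exact hH'.continuousOn.comp_continuous (by fun_prop) (fun x => hmem x y hy)
  have hHint : ∀ y ∈ Icc (-γ) c, Integrable (fun x : ℝ => deriv H (x + y * Complex.I)) := by
    intro y hy
    exact ⟨(hcderiv y hy.1).aestronglyMeasurable, lt_of_le_of_lt (hb y hy) hB.lt_top⟩
  have hpi : (-2 * Real.pi) ≠ 0 := by
    have := Real.pi_pos
    simp
  have hfvint : Integrable (FourierTransform.fourier v) := by
    rw [hfv]
    have := (hHint c ⟨hc, le_rfl⟩).comp_mul_left' hpi
    exact (this.mul_const _).const_mul _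
  have hinv := hvcont.fourierInv_fourier_eq hvint hfvint
  refine ⟨B.toReal / (2 * Real.pi), by positivity, ?_⟩
  intro t ht
  have ht0 : (0:ℝ) < t := by linarith
  set φ : ℂ → ℂ := fun z => Complex.exp (-(Complex.I * z * t)) * deriv H z with hφ
  have hnφ : ∀ x y : ℝ, ‖Complex.exp (-(Complex.I * (x + y * Complex.I) * t))‖
      = Real.exp (y * t) := by
    intro x y
    rw [Complex.norm_exp]
    simp
  have hshift := shift_aux φ μ (-γ) c (by linarith) hc (by
      refine DifferentiableOn.mul ?_ hH'
      fun_prop) (ENNReal.ofReal (Real.exp (c * t)) * B) (ENNReal.mul_ne_top (by simp) hB) (by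
      intro y hy
      calc ∫⁻ x : ℝ, ‖φ (x + y * Complex.I)‖ₑ
          ≤ ∫⁻ x : ℝ, ENNReal.ofReal (Real.exp (c * t)) * ‖deriv H (x + y * Complex.I)‖ₑ := by
            refine lintegral_mono fun x => ?_
            simp only [hφ]
            rw [enorm_mul]
            gcongr
            rw [← ofReal_norm, hnφ]
            gcongr
            exact hy.2
        _ = ENNReal.ofReal (Real.exp (c * t)) * ∫⁻ x : ℝ, ‖deriv H (x + y * Complex.I)‖ₑ :=
            lintegral_const_mul' _ _ (by simp)
        _ ≤ _ := by
            gcongr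
            exact hb y hy)
  have hval : ∫ x : ℝ, φ (x + c * Complex.I) = 2 * Real.pi * (t * h t) := by
    have h1 := congrFun hinv t
    rw [Real.fourierInv_eq', hfv] at h1
    have h2 : v t = -2 * Real.pi * Complex.I * t * (Complex.exp (-(c * t)) * h t) := by
      simp [hv, hw, indicator_of_mem (show t ∈ Ioi (0:ℝ) from ht0)]
    rw [h2] at h1
    have h3 : ∀ ξ : ℝ, Complex.exp (((2 * Real.pi * inner ℝ ξ t : ℝ) : ℂ) * Complex.I) •
        (Complex.I * (deriv H (((-2 * Real.pi * ξ : ℝ) : ℂ) + c * Complex.I)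
        * (-2 * Real.pi : ℝ))) = (Complex.I * (-2 * Real.pi : ℝ) * Complex.exp (-(c * t))) *
          (fun x : ℝ => φ (x + c * Complex.I)) (-2 * Real.pi * ξ) := by
      intro ξ
      have h4 : Complex.exp (((2 * Real.pi * inner ℝ ξ t : ℝ) : ℂ) * Complex.I) =
          Complex.exp (-(c * t)) * Complex.exp (-(Complex.I * (((-2 * Real.pi * ξ : ℝ) : ℂ)
            + c * Complex.I) * t)) := by
        rw [← Complex.exp_add]
        congr 1
        simp
        linear_combination (c * t : ℂ) * (Complex.I_sq)
      rw [h4]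
      simp only [hφ, smul_eq_mul]
      ring
    simp_rw [h3] at h1
    rw [integral_const_mul, Measure.integral_comp_mul_left
      (fun x : ℝ => φ (x + c * Complex.I)) (-2 * Real.pi)] at h1
    have h5 : |(-2 * Real.pi)⁻¹| = (2 * Real.pi)⁻¹ := by
      rw [abs_inv, neg_mul, abs_neg, abs_of_pos (by positivity)]
    rw [h5, Complex.real_smul] at h1
    have hE : Complex.exp (-(c * t : ℂ)) ≠ 0 := Complex.exp_ne_zero _
    have hp : (Real.pi : ℂ) ≠ 0 := by exact_mod_cast Real.pi_ne_zero
    have hI := Complex.I_ne_zero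
    generalize (∫ x : ℝ, φ (x + c * Complex.I)) = J at h1 ⊢
    push_cast at h1
    field_simp at h1
    linear_combination -h1
  have hle : ‖∫ x : ℝ, φ (x + (-γ : ℝ) * Complex.I)‖ ≤ Real.exp (-(γ * t)) * B.toReal := by
    have hγm : -γ ∈ Icc (-γ) c := ⟨le_rfl, hc⟩
    calc _ ≤ ∫ x : ℝ, ‖φ (x + (-γ : ℝ) * Complex.I)‖ := norm_integral_le_integral_norm _
      _ = ∫ x : ℝ, Real.exp (-(γ * t)) * ‖deriv H (x + (-γ : ℝ) * Complex.I)‖ := by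
          congr 1
          ext x
          simp only [hφ]
          rw [norm_mul, hnφ, neg_mul]
      _ = Real.exp (-(γ * t)) * ∫ x : ℝ, ‖deriv H (x + (-γ : ℝ) * Complex.I)‖ :=
          integral_const_mul _ _
      _ ≤ _ := by
          gcongr
          rw [integral_norm_eq_lintegral_enorm (hHint _ hγm).aestronglyMeasurable]
          exact ENNReal.toReal_mono hB (hb _ hγm)
  rw [hshift, hval, norm_mul, norm_mul, norm_mul, Complex.norm_real, Complex.norm_real,
    Real.norm_of_nonneg ht0.le, Real.norm_of_nonneg Real.pi_pos.le, Complex.norm_two] at hle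
  have h7 : ‖h t‖ ≤ t * ‖h t‖ := le_mul_of_one_le_left (norm_nonneg _) ht
  have hpp := Real.pi_pos
  rw [div_mul_eq_mul_div, le_div_iff₀ (by positivity)]
  nlinarith

theorem term_deriv_aux (b w z : ℂ) (k : ℕ) (hz : 1 ≤ |z.re - w.re|) :
    ∃ D : ℂ, HasDerivAt (fun z => b / (z - w) ^ (k + 1)) D z ∧
      ‖D‖ ≤ (2 * (‖b‖ * (k + 1))) * (1 + (z.re - w.re) ^ 2)⁻¹ := by
  have hn : |z.re - w.re| ≤ ‖z - w‖ := by
    have := Complex.abs_re_le_norm (z - w)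
    simpa using this
  have h1 : 1 ≤ ‖z - w‖ := hz.trans hn
  have hne : z - w ≠ 0 := by
    intro h0
    rw [h0, norm_zero] at h1
    linarith
  have hd := ((((hasDerivAt_id z).sub_const w).pow (k + 1)).inv (pow_ne_zero (k + 1) hne)).const_mul b
  refine ⟨-(b * (k + 1) / (z - w) ^ (k + 2)), ?_, ?_⟩
  · refine (hd.congr_deriv ?_).congr_of_eventuallyEq (Eventually.of_forall fun z => ?_)
    · simp
      field_simp
      ring
    · simp [div_eq_mul_inv]
  · rw [norm_neg, norm_div, norm_mul, norm_pow]
    have hk : ‖(k + 1 : ℂ)‖ = k + 1 := by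
      have := Complex.norm_natCast (k + 1)
      push_cast at this
      exact this
    rw [hk]
    have h2 : ‖z - w‖ ^ 2 ≤ ‖z - w‖ ^ (k + 2) := pow_le_pow_right₀ h1 (by omega)
    have h3 : (z.re - w.re) ^ 2 ≤ ‖z - w‖ ^ 2 := by
      rw [← sq_abs]
      gcongr
    have h4 : 1 ≤ ‖z - w‖ ^ 2 := one_le_pow₀ h1
    rw [← div_eq_mul_inv, div_le_div_iff₀ (by linarith) (by positivity)]
    have h5 : 1 + (z.re - w.re) ^ 2 ≤ 2 * ‖z - w‖ ^ (k + 2) := by linarith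
    calc ‖b‖ * (k + 1) * (1 + (z.re - w.re) ^ 2) ≤ ‖b‖ * (k + 1) * (2 * ‖z - w‖ ^ (k + 2)) := by
          gcongr
      _ = _ := by ring

theorem lone_aux (μ γ c : ℝ) (hγ : γ < μ) (F H : ℂ → ℂ) (w : ℂ) (N : ℕ) (b : ℕ → ℂ)
    (hH : DifferentiableOn ℂ H {z : ℂ | -μ < z.im})
    (hF : ∀ z : ℂ, -μ < z.im → z ≠ w →
      F z = H z + ∑ k ∈ Finset.range N, b k / (z - w) ^ (k + 1))
    (r : ℝ) (C1 : ℝ)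
    (hF1 : ∀ y : ℝ, -μ < y →
      ∫⁻ x in {x : ℝ | r < |x|},
        ENNReal.ofReal ‖deriv F (x + y * Complex.I)‖ ≤ ENNReal.ofReal C1) :
    ∃ B : ℝ≥0∞, B ≠ ∞ ∧
      ∀ y ∈ Icc (-γ) c, ∫⁻ x : ℝ, ‖deriv H (x + y * Complex.I)‖ₑ ≤ B := by
  have hopen : IsOpen {z : ℂ | -μ < z.im} := isOpen_lt continuous_const Complex.continuous_im
  have hH' : DifferentiableOn ℂ (deriv H) {z : ℂ | -μ < z.im} := hH.deriv hopen
  set R : ℝ := max r (|w.re| + 1) with hR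
  set S : Set ℝ := {x : ℝ | R < |x|} with hS
  have hSm : MeasurableSet S := measurableSet_lt measurable_const (by fun_prop)
  have hScompl : Sᶜ = Icc (-R) R := by
    ext x
    rw [mem_compl_iff, hS, mem_ofPred_eq, not_lt, abs_le, mem_Icc]
  -- bound on the compact part
  have hmem : ∀ x y : ℝ, -γ ≤ y → ((x : ℂ) + y * Complex.I) ∈ {z : ℂ | -μ < z.im} := by
    intro x y hy
    simp only [mem_ofPred_eq]
    simp
    linarith
  have hcomp : IsCompact (Icc (-R) R ×ˢ Icc (-γ) c) := isCompact_Icc.prod isCompact_Icc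
  obtain ⟨K0, hK0⟩ := hcomp.exists_bound_of_continuousOn
    (f := fun q : ℝ × ℝ => deriv H (q.1 + q.2 * Complex.I)) (by
      refine hH'.continuousOn.comp (by fun_prop) ?_
      rintro ⟨x, y⟩ ⟨-, hy⟩
      exact hmem x y hy.1)
  set Kp : ℝ := ∑ k ∈ Finset.range N, 2 * (‖b k‖ * (k + 1)) with hKp
  have hpt : ∀ y, -γ ≤ y → ∀ x ∈ S, ‖deriv H (x + y * Complex.I)‖ₑ ≤
      ENNReal.ofReal ‖deriv F (x + y * Complex.I)‖ +
        ENNReal.ofReal (Kp * (1 + (x - w.re) ^ 2)⁻¹) := by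
    intro y hy x hx
    set z : ℂ := x + y * Complex.I with hz
    have hzre : z.re = x := by simp [hz]
    have hzU := hmem x y hy
    have hx1 : 1 ≤ |z.re - w.re| := by
      have h1 : R < |x| := hx
      have h2 := le_max_right r (|w.re| + 1)
      have h3 := abs_sub_abs_le_abs_sub x w.re
      rw [hzre]
      linarith
    have hzw : z ≠ w := by
      intro h0
      rw [h0] at hx1
      simp at hx1
      linarith
    choose D hD1 hD2 using fun k => term_deriv_aux (b k) w z k hx1
    have hHd := (hH.differentiableAt (hopen.mem_nhds hzU)).hasDerivAt
    have hsum := HasDerivAt.fun_sum (u := Finset.range N) (fun k _ => hD1 k)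
    have hFd : HasDerivAt F (deriv H z + ∑ k ∈ Finset.range N, D k) z := by
      refine (hHd.add hsum).congr_of_eventuallyEq ?_
      filter_upwards [hopen.mem_nhds hzU, isOpen_ne.mem_nhds hzw] with q hq1 hq2
      exact hF q hq1 hq2
    rw [← ofReal_norm, ← ENNReal.ofReal_add (norm_nonneg _) (by positivity)]
    refine ENNReal.ofReal_le_ofReal ?_
    have e : deriv H z = deriv F z - ∑ k ∈ Finset.range N, D k := by
      rw [hFd.deriv]
      ring
    rw [e]
    refine (norm_sub_le _ _).trans ?_
    gcongr
    refine (norm_sum_le _ _).trans ?_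
    rw [hKp, Finset.sum_mul]
    refine Finset.sum_le_sum fun k _ => ?_
    have := hD2 k
    rwa [hzre] at this
  have hQint : Integrable (fun x : ℝ => Kp * (1 + (x - w.re) ^ 2)⁻¹) :=
    (integrable_inv_one_add_sq.comp_sub_right w.re).const_mul Kp
  set Q : ℝ≥0∞ := ∫⁻ x : ℝ, ENNReal.ofReal (Kp * (1 + (x - w.re) ^ 2)⁻¹) with hQ
  have hQfin : Q ≠ ∞ := hQint.lintegral_lt_top.ne
  refine ⟨(ENNReal.ofReal C1 + Q) + ENNReal.ofReal K0 * volume (Icc (-R) R), ?_, ?_⟩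
  · have : volume (Icc (-R) R) ≠ ∞ := by simp
    exact ENNReal.add_ne_top.mpr ⟨ENNReal.add_ne_top.mpr ⟨by simp, hQfin⟩,
      ENNReal.mul_ne_top (by simp) this⟩
  · intro y hy
    rw [← lintegral_add_compl _ hSm]
    refine add_le_add ?_ ?_
    · calc _ ≤ ∫⁻ x in S, (ENNReal.ofReal ‖deriv F (x + y * Complex.I)‖ +
              ENNReal.ofReal (Kp * (1 + (x - w.re) ^ 2)⁻¹)) :=
            setLIntegral_mono' hSm (hpt y hy.1)
        _ = (∫⁻ x in S, ENNReal.ofReal ‖deriv F (x + y * Complex.I)‖) +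
              ∫⁻ x in S, ENNReal.ofReal (Kp * (1 + (x - w.re) ^ 2)⁻¹) :=
            lintegral_add_right _ (by fun_prop)
        _ ≤ _ := by
            refine add_le_add ?_ (setLIntegral_le_lintegral _ _)
            refine le_trans (lintegral_mono_set ?_) (hF1 y (by linarith [hy.1]))
            intro x hx
            exact lt_of_le_of_lt (le_max_left r (|w.re| + 1)) hx
    · rw [hScompl, ← setLIntegral_const]
      refine setLIntegral_mono measurable_const fun x hx => ?_
      rw [← ofReal_norm]
      exact ENNReal.ofReal_le_ofReal (hK0 (x, y) ⟨hx, hy⟩)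

/-- Resonance expansion (Proposition 5.1, stated via the Laplace transform):
if `g` is continuous with `‖g(t)‖ ≤ M e^{mt}`, its Laplace transform
`f(z) = -i ∫_0^∞ e^{izt} g(t) dt` (defined for `Im z > m`) extends meromorphically to
`{Im z > -μ}` with a unique singularity, a pole of order `N` at `𝔯` (witnessed by an
analytic `G` with `G 𝔯 ≠ 0` and `f = G/(z-𝔯)^N`), and the extension satisfies uniform
`L²` (resp. `L¹` for the derivative) bounds on horizontal lines away from `|x| ≤ r`,
then `g(t) = e^{-it𝔯} p(t) + O(e^{-γt})` for a polynomial `p` of degree `N-1` whose value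
at `0` is the residue of `f` at `𝔯`. -/
theorem resonance_expansion_of_laplace_transform
    (m M : ℝ) (hm : 0 < m) (hM : 0 < M)
    (g : ℝ → ℂ) (hgcont : ContinuousOn g (Set.Ici 0))
    (hgbound : ∀ t : ℝ, 0 ≤ t → ‖g t‖ ≤ M * Real.exp (m * t))
    (𝔯 : ℂ) (N : ℕ) (hN : 1 ≤ N) (μ : ℝ) (hμ : 0 < μ) (h𝔯 : -μ < 𝔯.im)
    (F : ℂ → ℂ)
    (hFeq : ∀ z : ℂ, m < z.im →
      F z = -Complex.I * ∫ t in Set.Ioi (0:ℝ), Complex.exp (Complex.I * z * t) * g t)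
    (G : ℂ → ℂ)
    (hGdiff : DifferentiableOn ℂ G {z : ℂ | -μ < z.im})
    (hG0 : G 𝔯 ≠ 0)
    (hFG : ∀ z : ℂ, -μ < z.im → z ≠ 𝔯 → F z = G z / (z - 𝔯) ^ N)
    (r : ℝ) (hr : 0 < r) (C0 C1 : ℝ)
    (hF0 : ∀ y : ℝ, -μ < y →
      ∫⁻ x in {x : ℝ | r < |x|},
        ENNReal.ofReal (‖F (x + y * Complex.I)‖ ^ 2) ≤ ENNReal.ofReal C0)
    (hF1 : ∀ y : ℝ, -μ < y →
      ∫⁻ x in {x : ℝ | r < |x|},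
        ENNReal.ofReal ‖deriv F (x + y * Complex.I)‖ ≤ ENNReal.ofReal C1) :
    ∀ γ : ℝ, max (-𝔯.im) 0 < γ → γ < μ →
      ∃ (p : Polynomial ℂ) (Cc : ℝ), 0 ≤ Cc ∧
        p.natDegree = N - 1 ∧
        p.eval 0 = iteratedDeriv (N - 1) G 𝔯 / (Nat.factorial (N - 1) : ℂ) ∧
        ∀ t : ℝ, 1 ≤ t →
          ‖g t - Complex.exp (-(Complex.I * (t : ℂ) * 𝔯)) * p.eval (t : ℂ)‖ ≤
            Cc * Real.exp (-(γ * t)) := by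
  intro γ hγ0 hγ
  have hγpos : 0 < γ := lt_of_le_of_lt (le_max_right _ _) hγ0
  have hopen : IsOpen {z : ℂ | -μ < z.im} := isOpen_lt continuous_const Complex.continuous_im
  obtain ⟨H, hH, hGH⟩ := taylor_aux _ hopen 𝔯 h𝔯 G hGdiff N
  set b : ℕ → ℂ := fun k => iteratedDeriv (N - 1 - k) G 𝔯 / ((N - 1 - k).factorial : ℂ) with hb
  have hFH : ∀ z : ℂ, -μ < z.im → z ≠ 𝔯 →
      F z = H z + ∑ k ∈ Finset.range N, b k / (z - 𝔯) ^ (k + 1) := by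
    intro z hz hne
    have hne' : z - 𝔯 ≠ 0 := sub_ne_zero.mpr hne
    rw [hFG z hz hne, hGH z, add_div, mul_div_cancel_left₀ _ (pow_ne_zero N hne'), add_comm,
      Finset.sum_div]
    congr 1
    rw [← Finset.sum_range_reflect]
    refine Finset.sum_congr rfl fun k hk => ?_
    have hk' : k < N := Finset.mem_range.mp hk
    have e : (z - 𝔯) ^ N = (z - 𝔯) ^ (N - 1 - k) * (z - 𝔯) ^ (k + 1) := by
      rw [← pow_add]
      congr 1
      omega
    rw [e, hb]
    field_simp
  set q : ℕ → ℂ := fun k => b k * (-Complex.I) ^ k / (k.factorial : ℂ) with hq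
  set p : Polynomial ℂ := ∑ k ∈ Finset.range N, Polynomial.monomial k (q k) with hp
  have hpeval : ∀ x : ℂ, p.eval x = ∑ k ∈ Finset.range N, q k * x ^ k := by
    intro x
    rw [hp, Polynomial.eval_finsetSum]
    simp
  have hpcoeff : ∀ k, k < N → p.coeff k = q k := by
    intro k hk
    rw [hp, Polynomial.finsetSum_coeff]
    simp [Polynomial.coeff_monomial, hk]
  set c1 : ℝ := max m 𝔯.im + 1 with hc1
  have hc1m : m < c1 := by
    have := le_max_left m 𝔯.im
    linarith
  have hc1r : 𝔯.im + 1 ≤ c1 := by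
    have := le_max_right m 𝔯.im
    linarith
  set c : ℝ := c1 + 1 with hc
  obtain ⟨B, hB, hBb⟩ := lone_aux μ γ c hγ F H 𝔯 N b hH hFH r C1 hF1
  set h : ℝ → ℂ := fun t => g t - Complex.exp (-(Complex.I * (t : ℂ) * 𝔯)) * p.eval (t : ℂ)
    with hh
  have hcont : ContinuousOn h (Ici 0) := by
    refine hgcont.sub (Continuous.continuousOn ?_)
    have := p.continuous
    fun_prop
  set Kp : ℝ := ∑ k ∈ Finset.range N, ‖q k‖ * k.factorial with hKp
  have hbound : ∀ t : ℝ, 0 ≤ t → ‖h t‖ ≤ (M + Kp) * Real.exp (c1 * t) := by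
    intro t ht
    have h1 : ‖g t‖ ≤ M * Real.exp (c1 * t) := by
      refine (hgbound t ht).trans ?_
      gcongr
    have h2 : ‖p.eval (t : ℂ)‖ ≤ Kp * Real.exp t := by
      rw [hpeval, hKp, Finset.sum_mul]
      refine (norm_sum_le _ _).trans (Finset.sum_le_sum fun k _ => ?_)
      rw [norm_mul, norm_pow, Complex.norm_real, Real.norm_of_nonneg ht, mul_assoc]
      gcongr
      have := pow_le_exp_aux k 1 one_pos t ht
      simpa using this
    have h3 : ‖Complex.exp (-(Complex.I * (t : ℂ) * 𝔯))‖ = Real.exp (𝔯.im * t) := by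
      rw [Complex.norm_exp]
      simp
      ring
    have hKp0 : 0 ≤ Kp := Finset.sum_nonneg fun k _ => by positivity
    calc ‖h t‖ ≤ ‖g t‖ + ‖Complex.exp (-(Complex.I * (t : ℂ) * 𝔯)) * p.eval (t : ℂ)‖ :=
          norm_sub_le _ _
      _ ≤ M * Real.exp (c1 * t) + Real.exp (𝔯.im * t) * (Kp * Real.exp t) := by
          rw [norm_mul, h3]
          gcongr
      _ = M * Real.exp (c1 * t) + Kp * Real.exp ((𝔯.im + 1) * t) := by
          rw [add_mul 𝔯.im 1 t, one_mul, Real.exp_add (𝔯.im * t) t]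
          ring
      _ ≤ M * Real.exp (c1 * t) + Kp * Real.exp (c1 * t) := by
          gcongr
      _ = _ := by ring
  have hL : ∀ x : ℝ, H (x + c * Complex.I) =
      -Complex.I * ∫ t in Ioi (0:ℝ), Complex.exp (Complex.I * (x + c * Complex.I) * t) * h t := by
    intro x
    set z : ℂ := x + c * Complex.I with hz
    have hzim : z.im = c := by simp [hz]
    have hzr : z ≠ 𝔯 := by
      intro h0
      rw [h0] at hzim
      linarith
    have hzr' : z - 𝔯 ≠ 0 := sub_ne_zero.mpr hzr
    have h1 := hFH z (by rw [hzim]; linarith) hzr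
    have h2 := hFeq z (by rw [hzim]; linarith)
    set a : ℂ := -Complex.I * (z - 𝔯) with ha
    have hare : 0 < a.re := by
      have : a.re = c - 𝔯.im := by
        simp [ha, hzim]
      rw [this]
      linarith
    have hgint : IntegrableOn (fun t : ℝ => Complex.exp (Complex.I * z * t) * g t) (Ioi 0) := by
      refine integrable_exp_bound_aux _ (ContinuousOn.mul (by fun_prop) hgcont) M (c - m)
        (by linarith) ?_
      intro t ht
      have h3 : ‖Complex.exp (Complex.I * z * t)‖ = Real.exp (-(c * t)) := by
        rw [Complex.norm_exp]
        simp [hzim]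
      rw [norm_mul, h3]
      calc _ ≤ Real.exp (-(c * t)) * (M * Real.exp (m * t)) := by
            gcongr
            exact hgbound t ht
        _ = M * (Real.exp (-(c * t)) * Real.exp (m * t)) := by ring
        _ = _ := by
          rw [← Real.exp_add]
          congr 2
          ring
    have h4 : ∀ t : ℝ, Complex.exp (Complex.I * z * t) * h t =
        Complex.exp (Complex.I * z * t) * g t -
          ∑ k ∈ Finset.range N, q k * ((t : ℂ) ^ k * Complex.exp (-a * t)) := by
      intro t
      have h5 : Complex.exp (-a * t) = Complex.exp (Complex.I * z * t) *
          Complex.exp (-(Complex.I * (t : ℂ) * 𝔯)) := by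
        rw [← Complex.exp_add]
        congr 1
        rw [ha]
        ring
      simp only [hh]
      rw [hpeval, h5, mul_sub, ← mul_assoc, Finset.mul_sum]
      congr 1
      refine Finset.sum_congr rfl fun k _ => ?_
      ring
    have hti : ∀ k ∈ Finset.range N, IntegrableOn
        (fun t : ℝ => q k * ((t : ℂ) ^ k * Complex.exp (-a * t))) (Ioi 0) := fun k _ =>
      (integrable_pow_exp_aux k a hare).const_mul (q k)
    simp_rw [h4]
    rw [integral_sub hgint (integrable_finsetSum _ hti), integral_finsetSum _ hti, mul_sub, ← h2,
      h1, Finset.mul_sum]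
    have h6 : ∀ k ∈ Finset.range N, -Complex.I * ∫ t in Ioi (0:ℝ),
        q k * ((t : ℂ) ^ k * Complex.exp (-a * t)) = b k / (z - 𝔯) ^ (k + 1) := by
      intro k _
      rw [integral_const_mul, laplace_pow_aux k a hare, ha, mul_pow, hq]
      have hf : (k.factorial : ℂ) ≠ 0 := by exact_mod_cast k.factorial_ne_zero
      have hI : (-Complex.I) ≠ 0 := neg_ne_zero.mpr Complex.I_ne_zero
      generalize -Complex.I = J at hI ⊢
      field_simp
      ring
    rw [Finset.sum_congr rfl h6]
    ring
  obtain ⟨C, hC0, hC⟩ := core_aux μ γ c (M + Kp) c1 hγ (by linarith) (by linarith) H hH B hB hBb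
    h hcont hbound hL
  refine ⟨p, C, hC0, ?_, ?_, hC⟩
  · refine Polynomial.natDegree_eq_of_le_of_coeff_ne_zero ?_ ?_
    · refine Polynomial.natDegree_sum_le_of_forall_le _ _ fun k hk => ?_
      have hk' : k < N := Finset.mem_range.mp hk
      exact (Polynomial.natDegree_monomial_le _).trans (by omega)
    · rw [hpcoeff (N - 1) (by omega)]
      have hf : ((N - 1).factorial : ℂ) ≠ 0 := by exact_mod_cast (N - 1).factorial_ne_zero
      simp only [hq, hb, Nat.sub_self, iteratedDeriv_zero, Nat.factorial_zero, Nat.cast_one, div_one]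
      exact div_ne_zero (mul_ne_zero hG0 (pow_ne_zero _ (neg_ne_zero.mpr Complex.I_ne_zero))) hf
  · rw [← Polynomial.coeff_zero_eq_eval_zero, hpcoeff 0 (by omega)]
    simp [hq, hb]
end

section
/- In the setting of the previous statement (g(t) = e^{-it𝔯} p(t) + R(t) with |R(t)| ≤ K e^{-γt}, γ > max(0, -Im 𝔯), and f(z) = -i∫_0^∞ e^{izt} g(t) dt extended meromorphically to {Im z > -γ}), assume in addition that R is twice continuously differentiable on [0,∞) and |R'(t)| ≤ K' e^{-γt} and |R''(t)| ≤ K' e^{-γt} for all t ≥ 0 and some K' ≥ 0. Then there exists r > 0 such that for every 0 < μ < γ, sup_{y > -μ} ∫_{|x| > r} |f'(x+iy)| dx < ∞, where f' is the complex derivative of the extension of f. -/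
open MeasureTheory Filter Set
open scoped ENNReal

lemma aux_norm (z : ℂ) (t : ℝ) : ‖Complex.exp (Complex.I * z * t)‖ = Real.exp (-(z.im * t)) := by
  rw [Complex.norm_exp]; simp

lemma aux_bound {h : ℝ → ℂ} {C b : ℝ} (z : ℂ) 
    (hb : ∀ t : ℝ, 0 ≤ t → ‖h t‖ ≤ C * Real.exp (-(b * t))) (t : ℝ) (ht : 0 ≤ t) :
    ‖Complex.exp (Complex.I * z * t) * h t‖ ≤ C * Real.exp (-(b + z.im) * t) := by
  rw [norm_mul, aux_norm]
  calc _ ≤ Real.exp (-(z.im * t)) * (C * Real.exp (-(b * t))) := by gcongr; exact hb t ht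
    _ = C * (Real.exp (-(z.im * t)) * Real.exp (-(b * t))) := by ring
    _ = _ := by rw [← Real.exp_add]; ring_nf

lemma aux_cont {h : ℝ → ℂ} (z : ℂ) (hc : ContinuousOn h (Ici 0)) :
    ContinuousOn (fun t : ℝ => Complex.exp (Complex.I * z * t) * h t) (Ici 0) :=
  ContinuousOn.mul (by fun_prop) hc

lemma aux_meas {h : ℝ → ℂ} (z : ℂ) (hc : ContinuousOn h (Ici 0)) :
    AEStronglyMeasurable (fun t : ℝ => Complex.exp (Complex.I * z * t) * h t)
      (volume.restrict (Ioi 0)) :=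
  ((aux_cont z hc).mono Ioi_subset_Ici_self).aestronglyMeasurable measurableSet_Ioi

lemma aux_int {h : ℝ → ℂ} {C b : ℝ} (z : ℂ) (hc : ContinuousOn h (Ici 0))
    (hb : ∀ t : ℝ, 0 ≤ t → ‖h t‖ ≤ C * Real.exp (-(b * t))) (hz : 0 < b + z.im) :
    IntegrableOn (fun t : ℝ => Complex.exp (Complex.I * z * t) * h t) (Ioi 0) := by
  refine Integrable.mono' ((integrableOn_exp_mul_Ioi (a := -(b + z.im)) (by linarith) 0).const_mul C)
    (aux_meas z hc) ?_
  refine (ae_restrict_iff' measurableSet_Ioi).2 (ae_of_all _ fun t ht => ?_)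
  exact aux_bound z hb t (le_of_lt ht)

lemma aux_int_le {h : ℝ → ℂ} {C b : ℝ} (z : ℂ)
    (hb : ∀ t : ℝ, 0 ≤ t → ‖h t‖ ≤ C * Real.exp (-(b * t))) (hz : 0 < b + z.im) :
    ‖∫ t in Ioi (0:ℝ), Complex.exp (Complex.I * z * t) * h t‖ ≤ C / (b + z.im) := by
  have := MeasureTheory.norm_integral_le_of_norm_le (μ := volume.restrict (Ioi (0:ℝ)))
    ((integrableOn_exp_mul_Ioi (a := -(b + z.im)) (by linarith) 0).const_mul C)
    ((ae_restrict_iff' measurableSet_Ioi).2 (ae_of_all _ fun t ht => 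
      aux_bound z hb t (le_of_lt ht)))
  refine this.trans_eq ?_
  rw [integral_const_mul, integral_exp_mul_Ioi (by linarith)]
  simp [div_eq_mul_inv, ← inv_neg]

lemma aux_ibp {h h' : ℝ → ℂ} {C b : ℝ} (z : ℂ)
    (hd : ∀ t : ℝ, 0 ≤ t → HasDerivWithinAt h (h' t) (Ici 0) t)
    (hc' : ContinuousOn h' (Ici 0))
    (hb : ∀ t : ℝ, 0 ≤ t → ‖h t‖ ≤ C * Real.exp (-(b * t)))
    (hb' : ∀ t : ℝ, 0 ≤ t → ‖h' t‖ ≤ C * Real.exp (-(b * t))) (hz : 0 < b + z.im) :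
    Complex.I * z * (∫ t in Ioi (0:ℝ), Complex.exp (Complex.I * z * t) * h t) =
      - h 0 - ∫ t in Ioi (0:ℝ), Complex.exp (Complex.I * z * t) * h' t := by
  have hc : ContinuousOn h (Ici 0) := fun t ht => (hd t ht).continuousWithinAt
  have i1 := aux_int z hc hb hz
  have i2 := aux_int z hc' hb' hz
  have key := integral_Ioi_of_hasDerivAt_of_tendsto (a := 0) (m := 0)
    (f := fun t : ℝ => Complex.exp (Complex.I * z * t) * h t)
    (f' := fun t : ℝ => Complex.I * z * (Complex.exp (Complex.I * z * t) * h t) +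
      Complex.exp (Complex.I * z * t) * h' t)
    (aux_cont z hc 0 self_mem_Ici) ?_ ((i1.const_mul _).add i2) ?_
  · rw [integral_add (i1.const_mul _) i2, integral_const_mul] at key
    simp at key
    linear_combination key
  · intro t ht
    have h1 : HasDerivAt h (h' t) t := (hd t (le_of_lt ht)).hasDerivAt (Ici_mem_nhds ht)
    have h2 : HasDerivAt (fun t : ℝ => Complex.exp (Complex.I * z * t))
        (Complex.exp (Complex.I * z * t) * (Complex.I * z * 1)) t :=
      ((Complex.ofRealCLM.hasDerivAt (x := t)).const_mul (Complex.I * z)).cexp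
    convert! h2.mul h1 using 1
    ring
  · have h0 : Tendsto (fun t : ℝ => C * Real.exp (-(b + z.im) * t)) atTop (nhds 0) := by
      have := (Real.tendsto_exp_atBot.comp
        (tendsto_id.const_mul_atTop_of_neg (show -(b + z.im) < 0 by linarith))).const_mul C
      simpa using! this
    refine squeeze_zero_norm' ?_ h0
    filter_upwards [eventually_ge_atTop 0] with t ht using aux_bound z hb t ht

/-- polynomial times exponential -/
lemma aux_t {a : ℝ} (ha : 0 < a) (k : ℕ) (t : ℝ) (ht : 0 ≤ t) :
    t ^ k ≤ (k.factorial / a ^ k) * Real.exp (a * t) := by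
  have := Real.pow_div_factorial_le_exp (a * t) (by positivity) k
  rw [div_le_iff₀ (by positivity)] at this
  rw [div_mul_eq_mul_div, le_div_iff₀ (by positivity)]
  calc _ = (a * t) ^ k := by ring
    _ ≤ _ := this
    _ = _ := by ring

lemma aux_deriv {h : ℝ → ℂ} {C b : ℝ} (z : ℂ) (hc : ContinuousOn h (Ici 0)) (hC : 0 ≤ C)
    (hb : ∀ t : ℝ, 0 ≤ t → ‖h t‖ ≤ C * Real.exp (-(b * t))) (hz : 0 < b + z.im) :
    HasDerivAt (fun z : ℂ => ∫ t in Ioi (0:ℝ), Complex.exp (Complex.I * z * t) * h t)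
      (Complex.I * ∫ t in Ioi (0:ℝ), Complex.exp (Complex.I * z * t) * (t * h t)) z := by
  set e : ℝ := (b + z.im) / 3 with he
  have hepos : 0 < e := by positivity
  have key := hasDerivAt_integral_of_dominated_loc_of_deriv_le (𝕜 := ℂ) (x₀ := z)
    (μ := volume.restrict (Ioi (0:ℝ)))
    (F := fun z t => Complex.exp (Complex.I * z * t) * h t)
    (F' := fun z t => Complex.I * (Complex.exp (Complex.I * z * t) * (t * h t)))
    (s := Metric.ball z e) (bound := fun t => C / e * Real.exp (-e * t))
    (Metric.ball_mem_nhds z hepos)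
    (Eventually.of_forall fun w => aux_meas w hc) (aux_int z hc hb hz)
    ((aux_meas z (ContinuousOn.mul (by fun_prop) hc)).const_mul _) ?_
    ((integrableOn_exp_mul_Ioi (by linarith) 0).const_mul _) ?_
  · have := key.2
    rwa [integral_const_mul] at this
  · refine (ae_restrict_iff' measurableSet_Ioi).2 (ae_of_all _ fun t ht w hw => ?_)
    have ht : 0 < t := ht
    have h1 : |(w - z).im| < e := 
      (Complex.abs_im_le_norm _).trans_lt (by simpa [dist_eq_norm] using hw)
    rw [Complex.sub_im, abs_lt] at h1
    have h2 := aux_bound w hb t ht.le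
    have h3 := aux_t hepos 1 t ht.le
    simp at h3
    calc _ = t * ‖Complex.exp (Complex.I * w * t) * h t‖ := by 
          simp [abs_of_pos ht]; ring
      _ ≤ (1 / e * Real.exp (e * t)) * (C * Real.exp (-(b + w.im) * t)) := by
          gcongr
          simpa using h3
      _ = C / e * (Real.exp (e * t) * Real.exp (-(b + w.im) * t)) := by ring
      _ ≤ _ := by
          rw [← Real.exp_add]
          gcongr
          nlinarith
  · refine ae_of_all _ fun t w hw => ?_
    have h2 : HasDerivAt (fun w : ℂ => Complex.exp (Complex.I * w * t)) 
        (Complex.exp (Complex.I * w * t) * (Complex.I * 1 * t)) w :=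
      (((hasDerivAt_id w).const_mul Complex.I).mul_const (t:ℂ)).cexp
    convert! h2.mul_const (h t) using 1
    ring

lemma aux_pow_bound {a : ℝ} (ha : 0 < a) (k : ℕ) (t : ℝ) (ht : 0 ≤ t) :
    ‖(t:ℂ) ^ k‖ ≤ (k.factorial / a ^ k) * Real.exp (-(-a * t)) := by
  simpa [abs_of_nonneg ht] using aux_t ha k t ht

lemma aux_pow_int (w : ℂ) (hw : 0 < w.im) (k : ℕ) :
    IntegrableOn (fun t : ℝ => Complex.exp (Complex.I * w * t) * (t:ℂ) ^ k) (Ioi 0) :=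
  aux_int w (by fun_prop) (aux_pow_bound (half_pos hw) k) (by linarith)

lemma aux_pow (w : ℂ) (hw : 0 < w.im) (k : ℕ) :
    ∫ t in Ioi (0:ℝ), Complex.exp (Complex.I * w * t) * (t:ℂ) ^ k =
      k.factorial * (Complex.I / w) ^ (k + 1) := by
  have hw0 : w ≠ 0 := by rintro rfl; simp at hw
  have hI : Complex.I * Complex.I = -1 := Complex.I_mul_I
  induction k with
  | zero =>
    have := aux_ibp (h := fun _ => 1) (h' := fun _ => 0) (C := 1) (b := 0) w
      (fun t _ => hasDerivWithinAt_const ..) (by fun_prop) (by simp) (by simp) (by simpa)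
    simp at this ⊢
    field_simp
    linear_combination (-Complex.I) * this + (w * ∫ (t : ℝ) in Ioi 0, Complex.exp (Complex.I * w * t)) * hI
  | succ k ih =>
    have ha := half_pos hw
    have := aux_ibp (h := fun t : ℝ => (t:ℂ) ^ (k+1)) (h' := fun t : ℝ => (k+1) * (t:ℂ) ^ k) 
      (C := max ((k+1).factorial / (w.im/2) ^ (k+1)) ((k + 1) * (k.factorial / (w.im/2) ^ k)))
      (b := -(w.im/2)) w
      (fun t _ => by
        have := (Complex.ofRealCLM.hasDerivAt (x := t)).pow (k+1)
        simpa using! this.hasDerivWithinAt) (by fun_prop)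
      (fun t ht => (aux_pow_bound ha (k+1) t ht).trans (by gcongr; exact le_max_left ..)) 
      (fun t ht => by
        have h1 := aux_pow_bound ha k t ht
        have h2 : ‖(k + 1 : ℂ)‖ = k + 1 := by
          exact_mod_cast Complex.norm_natCast (k+1)
        rw [norm_mul, h2]
        calc _ ≤ (k + 1 : ℝ) * ((k.factorial / (w.im/2) ^ k) * Real.exp (-(-(w.im/2) * t))) := by gcongr
          _ = ((k + 1 : ℝ) * (k.factorial / (w.im/2) ^ k)) * Real.exp (-(-(w.im/2) * t)) := by ring
          _ ≤ _ := by gcongr; exact le_max_right ..) (by linarith)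
    have h3 : ∫ t in Ioi (0:ℝ), Complex.exp (Complex.I * w * t) * ((k+1) * (t:ℂ) ^ k) =
        (k+1) * (k.factorial * (Complex.I / w) ^ (k + 1)) := by
      rw [← ih, ← integral_const_mul]
      congr 1; ext t; ring
    rw [h3] at this
    simp only [Complex.ofReal_zero, ne_eq, Nat.add_eq_zero_iff, one_ne_zero, and_false, not_false_eq_true, zero_pow, neg_zero, zero_sub] at this
    rw [pow_succ, Nat.factorial_succ]
    push_cast
    apply mul_left_cancel₀ (mul_ne_zero Complex.I_ne_zero hw0)
    rw [this]
    have hq : Complex.I * w * (Complex.I / w) = -1 := by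
      rw [← hI]; field_simp
    linear_combination (-(k.factorial * (k+1) * (Complex.I/w)^(k+1) : ℂ)) * hq

lemma aux_poly (𝔯 : ℂ) (p : Polynomial ℂ) : ∃ (P P' : ℂ → ℂ) (C : ℝ), 0 ≤ C ∧
    (∀ z, z ≠ 𝔯 → HasDerivAt P (P' z) z) ∧
    (∀ z, 1 ≤ ‖z - 𝔯‖ → ‖P' z‖ ≤ C / ‖z - 𝔯‖ ^ 2) ∧
    (∀ z : ℂ, 𝔯.im < z.im → 
      IntegrableOn (fun t : ℝ => Complex.exp (Complex.I * (z - 𝔯) * t) * p.eval (t:ℂ)) (Ioi 0) ∧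
      ∫ t in Ioi (0:ℝ), Complex.exp (Complex.I * (z - 𝔯) * t) * p.eval (t:ℂ) = P z) := by
  induction p using Polynomial.induction_on' with
  | add p q hp hq =>
    obtain ⟨P, P', C, h0, h1, h2, h3⟩ := hp
    obtain ⟨Q, Q', D, k0, k1, k2, k3⟩ := hq
    refine ⟨P + Q, P' + Q', C + D, by positivity, fun z hz => (h1 z hz).add (k1 z hz), ?_, ?_⟩
    · intro z hz
      rw [add_div]
      exact (norm_add_le _ _).trans (add_le_add (h2 z hz) (k2 z hz))
    · intro z hz
      obtain ⟨a1, a2⟩ := h3 z hz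
      obtain ⟨b1, b2⟩ := k3 z hz
      simp only [Polynomial.eval_add, mul_add]
      exact ⟨a1.add b1, by rw [integral_add a1 b1, a2, b2]; rfl⟩
  | monomial k c =>
    refine ⟨fun z => c * (k.factorial * (Complex.I / (z - 𝔯)) ^ (k + 1)),
      fun z => c * (k.factorial * ((k + 1 : ℕ) * (Complex.I / (z - 𝔯)) ^ k * 
        (-Complex.I / (z - 𝔯) ^ 2))), 
      ‖c‖ * (k.factorial * (k + 1 : ℕ)), by positivity, ?_, ?_, ?_⟩
    · intro z hz
      have hz' : z - 𝔯 ≠ 0 := sub_ne_zero.2 hz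
      have h1 : HasDerivAt (fun z : ℂ => Complex.I / (z - 𝔯)) (-Complex.I / (z - 𝔯) ^ 2) z := by
        convert! (hasDerivAt_const z Complex.I).div ((hasDerivAt_id z).sub_const 𝔯) hz' using 1
        simp
      simpa using! ((h1.pow (k+1)).const_mul (k.factorial : ℂ)).const_mul c
    · intro z hz
      have h1 : (1 / ‖z - 𝔯‖) ^ k ≤ 1 := 
        pow_le_one₀ (by positivity) ((div_le_one (by positivity)).2 hz)
      have : ‖c * (k.factorial * ((k + 1 : ℕ) * (Complex.I / (z - 𝔯)) ^ k * 
        (-Complex.I / (z - 𝔯) ^ 2)))‖ = ‖c‖ * (k.factorial * (k + 1 : ℕ)) / ‖z - 𝔯‖ ^ 2 *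
          (1 / ‖z - 𝔯‖) ^ k := by
        simp only [norm_mul, norm_div, norm_pow, norm_neg, Complex.norm_I, Complex.norm_natCast]
        ring
      rw [this]
      exact mul_le_of_le_one_right (by positivity) h1
    · intro z hz
      have hw : 0 < (z - 𝔯).im := by simpa using hz
      have e : (fun t : ℝ => Complex.exp (Complex.I * (z - 𝔯) * t) * 
          (Polynomial.monomial k c).eval (t:ℂ)) = fun t : ℝ => 
          c * (Complex.exp (Complex.I * (z - 𝔯) * t) * (t:ℂ) ^ k) := by
        ext t; simp; ring
      rw [e]
      refine ⟨(aux_pow_int _ hw k).const_mul c, ?_⟩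
      rw [integral_const_mul, aux_pow _ hw]

/-- decay of the derivative of the transform of the remainder -/
lemma aux_decay {γ : ℝ} {R R' R'' : ℝ → ℂ}
    (hR' : ∀ t : ℝ, 0 ≤ t → HasDerivWithinAt R (R' t) (Set.Ici 0) t)
    (hR'' : ∀ t : ℝ, 0 ≤ t → HasDerivWithinAt R' (R'' t) (Set.Ici 0) t)
    (hR''cont : ContinuousOn R'' (Set.Ici 0))
    {K K' : ℝ} (hK : 0 ≤ K) (hK' : 0 ≤ K')
    (hRbound : ∀ t : ℝ, 0 ≤ t → ‖R t‖ ≤ K * Real.exp (-(γ * t)))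
    (hR'bound : ∀ t : ℝ, 0 ≤ t → ‖R' t‖ ≤ K' * Real.exp (-(γ * t)))
    (hR''bound : ∀ t : ℝ, 0 ≤ t → ‖R'' t‖ ≤ K' * Real.exp (-(γ * t)))
    {μ : ℝ} (hμ : μ < γ) : ∃ M : ℝ, 0 ≤ M ∧ ∀ z : ℂ, -μ < z.im → 
      ‖z‖ ^ 2 * ‖∫ t in Ioi (0:ℝ), Complex.exp (Complex.I * z * t) * (t * R t)‖ ≤ M := by
  set a : ℝ := (γ - μ) / 2 with ha
  set b : ℝ := (γ + μ) / 2 with hb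
  have hapos : 0 < a := by rw [ha]; linarith
  have e1 (t : ℝ) (ht : 0 ≤ t) : Real.exp (-(γ * t)) ≤ Real.exp (-(b * t)) := by
    gcongr; rw [hb]; linarith
  have e2 (t : ℝ) (ht : 0 ≤ t) : t * Real.exp (-(γ * t)) ≤ 1 / a * Real.exp (-(b * t)) := by
    have := aux_t hapos 1 t ht
    simp only [pow_one, Nat.factorial_one, Nat.cast_one] at this
    calc _ ≤ (1 / a * Real.exp (a * t)) * Real.exp (-(γ * t)) := by gcongr
      _ = 1 / a * (Real.exp (a * t) * Real.exp (-(γ * t))) := by ring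
      _ = _ := by rw [← Real.exp_add]; congr 2; rw [ha, hb]; ring
  have hRc : ContinuousOn R (Ici 0) := fun t ht => (hR' t ht).continuousWithinAt
  have hRc' : ContinuousOn R' (Ici 0) := fun t ht => (hR'' t ht).continuousWithinAt
  set C : ℝ := (K + 2 * K') * (1 + 1 / a) with hC
  have hC0 : 0 ≤ C := by positivity
  have hai : 0 < 1 / a := by positivity
  have E (t : ℝ) : 0 < Real.exp (-(b * t)) := Real.exp_pos _
  have gen (u v : ℝ → ℂ) (A B : ℝ) (hA : 0 ≤ A) (hB : 0 ≤ B) (hAC : A ≤ K + 2 * K') (hBC : B ≤ K + 2 * K')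
      (hu : ∀ t : ℝ, 0 ≤ t → ‖u t‖ ≤ A * Real.exp (-(γ * t)))
      (hv : ∀ t : ℝ, 0 ≤ t → ‖v t‖ ≤ B * Real.exp (-(γ * t))) (t : ℝ) (ht : 0 ≤ t) :
      ‖u t + t * v t‖ ≤ C * Real.exp (-(b * t)) := by
    have : ‖(t:ℂ)‖ = t := by simp [abs_of_nonneg ht]
    calc _ ≤ ‖u t‖ + t * ‖v t‖ := (norm_add_le _ _).trans_eq (by rw [norm_mul, this])
      _ ≤ A * Real.exp (-(γ * t)) + t * (B * Real.exp (-(γ * t))) := by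
        gcongr
        · exact hu t ht
        · exact hv t ht
      _ = A * Real.exp (-(γ * t)) + B * (t * Real.exp (-(γ * t))) := by ring
      _ ≤ (K + 2 * K') * Real.exp (-(b * t)) + (K + 2 * K') * (1 / a * Real.exp (-(b * t))) := by
        exact add_le_add (mul_le_mul hAC (e1 t ht) (Real.exp_pos _).le (by positivity))
          (mul_le_mul hBC (e2 t ht) (by positivity) (by positivity))
      _ = _ := by rw [hC]; ring
  have b0 := gen (fun _ => 0) R 0 K le_rfl hK (by positivity) (by linarith) (by simp) hRbound
  have b1 := gen R R' K K' hK hK' (by linarith) (by linarith) hRbound hR'bound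
  have b2 := gen (fun t => 2 * R' t) R'' (2 * K') K' (by linarith) hK' (by linarith) (by linarith)
    (fun t ht => by rw [norm_mul, mul_assoc]; simpa using hR'bound t ht) hR''bound
  have id1 (t : ℝ) : HasDerivWithinAt (fun t : ℝ => (t:ℂ)) 1 (Ici 0) t :=
    (Complex.ofRealCLM.hasDerivAt (x := t)).hasDerivWithinAt
  refine ⟨‖R 0‖ + C / a, by positivity, fun z hz => ?_⟩
  have hbz : a ≤ b + z.im := by rw [ha, hb]; linarith
  have i1 := aux_ibp (h := fun t : ℝ => t * R t) (h' := fun t : ℝ => R t + t * R' t) z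
    (fun t ht => by simpa using! (id1 t).mul (hR' t ht)) 
    (hRc.add (ContinuousOn.mul (by fun_prop) hRc')) (by simpa using b0) b1 (by linarith)
  have i2 := aux_ibp (h := fun t : ℝ => R t + t * R' t) (h' := fun t : ℝ => 2 * R' t + t * R'' t) z
    (fun t ht => by
      convert! (hR' t ht).add ((id1 t).mul (hR'' t ht)) using 1
      ring) 
    ((ContinuousOn.mul (by fun_prop) hRc').add (ContinuousOn.mul (by fun_prop) hR''cont)) 
    b1 b2 (by linarith)
  have i3 := aux_int_le z b2 (by linarith)
  set J := ∫ t in Ioi (0:ℝ), Complex.exp (Complex.I * z * t) * (t * R t)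
  simp only [Complex.ofReal_zero, zero_mul, add_zero, neg_zero, zero_sub] at i1 i2
  have i4 : (Complex.I * z) ^ 2 * J = R 0 + 
      ∫ t in Ioi (0:ℝ), Complex.exp (Complex.I * z * t) * (2 * R' t + t * R'' t) := by
    linear_combination (Complex.I * z) * i1 - i2
  calc ‖z‖ ^ 2 * ‖J‖ = ‖(Complex.I * z) ^ 2 * J‖ := by simp
    _ ≤ ‖R 0‖ + C / (b + z.im) := by rw [i4]; exact (norm_add_le _ _).trans (by gcongr)
    _ ≤ _ := by gcongr

lemma aux_ident {F G : ℂ → ℂ} {S : Set ℂ} (hS : IsOpen S) (hconv : Convex ℝ S)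
    (hF : DifferentiableOn ℂ F S) (hG : DifferentiableOn ℂ G S) (c : ℝ) {w : ℂ} (hw : w ∈ S)
    (hwc : c < w.im) (h : ∀ z ∈ S, c < z.im → F z = G z) : EqOn F G S := by
  refine (hF.analyticOnNhd hS).eqOn_of_preconnected_of_eventuallyEq (hG.analyticOnNhd hS)
    hconv.isPreconnected hw ?_
  filter_upwards [hS.mem_nhds hw, 
    (isOpen_lt continuous_const Complex.continuous_im).mem_nhds hwc] with z h1 h2 using h z h1 h2

/-- Case `j = 1` of the resolvent estimates of Proposition 5.2: in the setting of the
converse resonance statement (`g(t) = e^{-it𝔯} p(t) + R(t)` with `‖R(t)‖ ≤ K e^{-γt}`,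
`γ > max(0, -Im 𝔯)`, and `F` the meromorphic extension of the Laplace transform
`f(z) = -i∫_0^∞ e^{izt} g(t) dt` to `{Im z > -γ} \ {𝔯}`), if moreover `R` is twice
continuously differentiable on `[0,∞)` with `‖R'(t)‖, ‖R''(t)‖ ≤ K' e^{-γt}`, then the
complex derivative of `F` satisfies a uniform `L¹` bound on horizontal lines in the
region `|x| > r`. -/
theorem converse_resonance_derivative_estimate
    (𝔯 : ℂ) (N : ℕ) (hN : 1 ≤ N)
    (p : Polynomial ℂ) (hp : p.degree = ((N - 1 : ℕ) : WithBot ℕ))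
    (γ : ℝ) (hγ : max 0 (-𝔯.im) < γ)
    (R R' R'' : ℝ → ℂ)
    (hR' : ∀ t : ℝ, 0 ≤ t → HasDerivWithinAt R (R' t) (Set.Ici 0) t)
    (hR'' : ∀ t : ℝ, 0 ≤ t → HasDerivWithinAt R' (R'' t) (Set.Ici 0) t)
    (hR''cont : ContinuousOn R'' (Set.Ici 0))
    (K K' : ℝ) (hK : 0 ≤ K) (hK' : 0 ≤ K')
    (hRbound : ∀ t : ℝ, 0 ≤ t → ‖R t‖ ≤ K * Real.exp (-(γ * t)))
    (hR'bound : ∀ t : ℝ, 0 ≤ t → ‖R' t‖ ≤ K' * Real.exp (-(γ * t)))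
    (hR''bound : ∀ t : ℝ, 0 ≤ t → ‖R'' t‖ ≤ K' * Real.exp (-(γ * t)))
    (g : ℝ → ℂ)
    (hg : ∀ t : ℝ, g t = Complex.exp (-(Complex.I * (t : ℂ) * 𝔯)) * p.eval (t : ℂ) + R t)
    (F : ℂ → ℂ)
    (hFeq : ∀ z : ℂ, 𝔯.im < z.im →
      F z = -Complex.I * ∫ t in Set.Ioi (0:ℝ), Complex.exp (Complex.I * z * t) * g t)
    (hFdiff : DifferentiableOn ℂ F {z : ℂ | -γ < z.im ∧ z ≠ 𝔯}) :
    ∃ r : ℝ, 0 < r ∧ ∀ μ : ℝ, 0 < μ → μ < γ → ∃ Cb : ℝ,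
      ∀ y : ℝ, -μ < y →
        ∫⁻ x in {x : ℝ | r < |x|},
          ENNReal.ofReal ‖deriv F (x + y * Complex.I)‖ ≤ ENNReal.ofReal Cb := by
  have hγ0 : 0 < γ := (le_max_left _ _).trans_lt hγ
  have hγr : -𝔯.im < γ := (le_max_right _ _).trans_lt hγ
  obtain ⟨P, P', C, hC, hP1, hP2, hP3⟩ := aux_poly 𝔯 p
  have hRc : ContinuousOn R (Ici 0) := fun t ht => (hR' t ht).continuousWithinAt
  set H : ℂ → ℂ := fun z => ∫ t in Ioi (0:ℝ), Complex.exp (Complex.I * z * t) * R t with hH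
  set H' : ℂ → ℂ := fun z => 
    Complex.I * ∫ t in Ioi (0:ℝ), Complex.exp (Complex.I * z * t) * (t * R t) with hH'
  have hHd (z : ℂ) (hz : -γ < z.im) : HasDerivAt H (H' z) z := 
    aux_deriv z hRc hK hRbound (by linarith)
  set G : ℂ → ℂ := fun z => -Complex.I * (P z + H z) with hG
  have hGd (z : ℂ) (hz : -γ < z.im) (hz' : z ≠ 𝔯) : 
      HasDerivAt G (-Complex.I * (P' z + H' z)) z :=
    ((hP1 z hz').add (hHd z hz)).const_mul _
  have hFG (z : ℂ) (hz : 𝔯.im < z.im) : F z = G z := by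
    obtain ⟨i1, i2⟩ := hP3 z hz
    have i3 := aux_int z hRc hRbound (by linarith)
    rw [hFeq z hz]
    simp only [hG, hH]
    rw [← i2, ← integral_add i1 i3]
    congr 2
    ext t
    rw [hg, mul_add, ← mul_assoc, ← Complex.exp_add]
    congr 3
    ring_nf
  set r : ℝ := |𝔯.re| + 1 with hr
  have hr1 : 1 ≤ r := by rw [hr]; linarith [abs_nonneg 𝔯.re]
  have ne (z : ℂ) (hz : r < |z.re|) : z ≠ 𝔯 := by
    rintro rfl; rw [hr] at hz; linarith
  have gen (S : Set ℂ) (hS : IsOpen S) (hconv : Convex ℝ S) (hS1 : ∀ z ∈ S, r < |z.re|)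
      (hS2 : ∀ z ∈ S, -γ < z.im) (w : ℂ) (hw : w ∈ S) (hw2 : 𝔯.im < w.im) (z : ℂ) (hz : z ∈ S) :
      deriv F z = -Complex.I * (P' z + H' z) := by
    have h1 : EqOn F G S := aux_ident hS hconv 
      (hFdiff.mono fun z hz => ⟨hS2 z hz, ne z (hS1 z hz)⟩)
      (fun z hz => (hGd z (hS2 z hz) (ne z (hS1 z hz))).differentiableAt.differentiableWithinAt)
      𝔯.im hw hw2 (fun z _ hz => hFG z hz)
    rw [(h1.eventuallyEq_of_mem (hS.mem_nhds hz)).deriv_eq]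
    exact (hGd z (hS2 z hz) (ne z (hS1 z hz))).deriv
  have hder (z : ℂ) (hz : -γ < z.im) (hzr : r < |z.re|) :
      deriv F z = -Complex.I * (P' z + H' z) := by
    rcases lt_abs.1 hzr with h | h
    · refine gen ({z | r < z.re} ∩ {z | -γ < z.im}) 
        ((isOpen_lt continuous_const Complex.continuous_re).inter 
          (isOpen_lt continuous_const Complex.continuous_im))
        ((convex_halfSpace_re_gt r).inter (convex_halfSpace_im_gt (-γ)))
        (fun z hz => lt_abs.2 (Or.inl hz.1)) (fun z hz => hz.2)
        ⟨r + 1, |𝔯.im| + 1⟩ ⟨?_, ?_⟩ ?_ z ⟨h, hz⟩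
      · simp
      · show -γ < |𝔯.im| + 1
        linarith [abs_nonneg 𝔯.im]
      · show 𝔯.im < |𝔯.im| + 1
        linarith [le_abs_self 𝔯.im]
    · refine gen ({z | z.re < -r} ∩ {z | -γ < z.im}) 
        ((isOpen_lt Complex.continuous_re continuous_const).inter 
          (isOpen_lt continuous_const Complex.continuous_im))
        ((convex_halfSpace_re_lt (-r)).inter (convex_halfSpace_im_gt (-γ)))
        (fun z hz => lt_abs.2 (Or.inr (by have := hz.1; simp at this; linarith))) (fun z hz => hz.2)
        ⟨-r - 1, |𝔯.im| + 1⟩ ⟨?_, ?_⟩ ?_ z ⟨by simp; linarith, hz⟩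
      · simp
      · show -γ < |𝔯.im| + 1
        linarith [abs_nonneg 𝔯.im]
      · show 𝔯.im < |𝔯.im| + 1
        linarith [le_abs_self 𝔯.im]
  refine ⟨r, by linarith, fun μ hμ0 hμ => ?_⟩
  obtain ⟨M, hM, hMb⟩ := aux_decay hR' hR'' hR''cont hK hK' hRbound hR'bound hR''bound hμ
  set A : ℝ := C * r ^ 2 + M with hA
  have hA0 : 0 ≤ A := by positivity
  have hbd (x y : ℝ) (hy : -μ < y) (hx : r < |x|) : 
      ‖deriv F (x + y * Complex.I)‖ ≤ 2 * A * (1 + x ^ 2)⁻¹ := by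
    set z : ℂ := x + y * Complex.I with hz
    have zre : z.re = x := by simp [hz]
    have zim : z.im = y := by simp [hz]
    have hx0 : 0 < |x| := by linarith
    have hx2 : 0 < x ^ 2 := by rw [← sq_abs]; positivity
    have hzx : |x| ≤ ‖z‖ := by rw [← zre]; exact Complex.abs_re_le_norm z
    have hd1 : |x| - |𝔯.re| ≤ ‖z - 𝔯‖ := by
      have := Complex.abs_re_le_norm (z - 𝔯)
      rw [Complex.sub_re, zre] at this
      exact (abs_sub_abs_le_abs_sub _ _).trans this
    have hd2 : |x| / r ≤ ‖z - 𝔯‖ := by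
      refine le_trans ?_ hd1
      rw [div_le_iff₀ (by linarith)]
      have : |𝔯.re| = r - 1 := by rw [hr]; ring
      rw [this]
      nlinarith
    have h1 : ‖P' z‖ ≤ C * r ^ 2 / x ^ 2 := by
      refine (hP2 z (by rw [hr] at hx; linarith)).trans ?_
      calc _ ≤ C / (|x| / r) ^ 2 := by gcongr
        _ = _ := by rw [div_pow, sq_abs]; field_simp
    have h2 : ‖H' z‖ ≤ M / x ^ 2 := by
      have := hMb z (by rw [zim]; exact hy)
      rw [le_div_iff₀ hx2]
      refine le_trans ?_ this
      simp only [hH', norm_mul, Complex.norm_I, one_mul]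
      rw [mul_comm, ← sq_abs]
      gcongr
    rw [hder z (by rw [zim]; linarith) (by rw [zre]; exact hx)]
    calc _ = ‖P' z + H' z‖ := by simp
      _ ≤ C * r ^ 2 / x ^ 2 + M / x ^ 2 := (norm_add_le _ _).trans (add_le_add h1 h2)
      _ = A * (1 / x ^ 2) := by rw [hA]; ring
      _ ≤ A * (2 * (1 + x ^ 2)⁻¹) := by
        gcongr
        rw [← div_eq_mul_inv, div_le_div_iff₀ hx2 (by positivity)]
        have : 1 ≤ x ^ 2 := by rw [← sq_abs]; nlinarith
        linarith
      _ = _ := by ring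
  refine ⟨∫ x : ℝ, 2 * A * (1 + x ^ 2)⁻¹, fun y hy => ?_⟩
  rw [ofReal_integral_eq_lintegral_ofReal (integrable_inv_one_add_sq.const_mul _)
    (ae_of_all _ fun x => by positivity)]
  have hms : MeasurableSet {x : ℝ | r < |x|} := 
    (isOpen_lt continuous_const continuous_abs).measurableSet
  refine le_trans (setLIntegral_mono' hms fun x hx => 
    ENNReal.ofReal_le_ofReal (hbd x y hy hx)) (setLIntegral_le_lintegral _ _)
end
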